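/- Let (U,ρ) be a complete metric space, let g ∈ W̃(ℝ,U), let p ≥ 1, and let F ∈ W̃_1(ℝ, (cl U, dist_{ρ'})) be such that F ∈ M*_p(ℝ, cl_b U) (i.e. F takes values in the non-empty closed bounded subsets of U and satisfies the M*_p condition with respect to the Hausdorff metric dist_ρ). Suppose that for every ε > 0 the set T(ε) := P^{(ρ')}_1(ε; g) ∩ P^{(dist_{ρ'})}_1(ε; F) is relatively dense. Then for every δ > 0 and every function h ∈ W_1(ℝ,ℝ) with dense countable frequency module Mod h, the selection f_δ ∈ W̃(ℝ,U) provided by the selection theorem (with f_δ(t) ∈ F(t) a.e., ρ(f_δ(t), g(t)) < ρ(g(t), F(t)) + δ a.e., and for every ε' > 0 an ε > 0 with P^{(ρ')}_1(ε'; f_δ) ⊇ T(ε) ∩ P^{(ρ_ℝ)}_1(ε; h)) can be chosen so that moreover f_δ ∈ W̃(ℝ,U) ∩ M*_p(ℝ,U) ⊆ W̃_p(ℝ,U). -/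

import Mathlib

open MeasureTheory Filter Topology TopologicalSpace
open scoped ENNReal Pointwise

noncomputable section

/-- The truncated ("bounded") distance `ρ'(x,y) = min {1, ρ(x,y)}` on a metric space. -/
def bdist {α : Type*} [PseudoMetricSpace α] : α → α → ℝ := fun x y => min 1 (dist x y)

/-- The Hausdorff distance `dist_{ρ'}` (corresponding to the truncated metric `ρ'`)
between non-empty closed subsets of a metric space. -/
def clDist {α : Type*} [MetricSpace α] : Closeds α → Closeds α → ℝ :=
  fun A B => (min 1 (EMetric.hausdorffEdist (A : Set α) (B : Set α))).toReal

/-- The Hausdorff distance `dist_ρ` between (non-empty closed bounded) subsets. -/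
def clbDist {α : Type*} [MetricSpace α] : Closeds α → Closeds α → ℝ :=
  fun A B => Metric.hausdorffDist (A : Set α) (B : Set α)

/-- `D^{(d)}_{p,l}(f,g) = ( sup_ξ (1/l) ∫_ξ^{ξ+l} d(f t, g t)^p dt )^{1/p}`,
valued in `ℝ≥0∞`. -/
def weylD {α : Type*} (d : α → α → ℝ) (p l : ℝ) (f g : ℝ → α) : ℝ≥0∞ :=
  (⨆ ξ : ℝ, ENNReal.ofReal (1 / l) *
      ∫⁻ t in Set.Icc ξ (ξ + l), ENNReal.ofReal (d (f t) (g t) ^ p)) ^ (1 / p)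

/-- The Weyl semimetric `D^{(d)}_p(f,g) = lim_{l → +∞} D^{(d)}_{p,l}(f,g)`
(the limit exists; it is formalized here as a `limsup`). -/
def weylDinf {α : Type*} (d : α → α → ℝ) (p : ℝ) (f g : ℝ → α) : ℝ≥0∞ :=
  Filter.limsup (fun l => weylD d p l f g) Filter.atTop

/-- Membership in `M_p(ℝ, α)`: `f` is (strongly) measurable and
`sup_ξ ∫_ξ^{ξ+1} d(f t, x₀)^p dt < +∞`. -/
def MemMp {α : Type*} [TopologicalSpace α] (d : α → α → ℝ) (p : ℝ) (x₀ : α)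
    (f : ℝ → α) : Prop :=
  AEStronglyMeasurable f MeasureTheory.volume ∧
  ∃ C : ℝ, ∀ ξ : ℝ,
    (∫⁻ t in Set.Icc ξ (ξ + 1), ENNReal.ofReal (d (f t) x₀ ^ p)) ≤ ENNReal.ofReal C

/-- A set `T ⊆ ℝ` is relatively dense. -/
def RelDense (T : Set ℝ) : Prop := ∃ a > 0, ∀ ξ : ℝ, (Set.Icc ξ (ξ + a) ∩ T).Nonempty

/-- The set of `(ε, D^{(d)}_{p,l})`-almost periods of `f`. -/
def APeriodsL {α : Type*} (d : α → α → ℝ) (p l ε : ℝ) (f : ℝ → α) : Set ℝ :=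
  {τ | weylD d p l f (fun t => f (t + τ)) < ENNReal.ofReal ε}

/-- The set `P^{(d)}_p(ε; f)` of `(ε, D^{(d)}_p)`-almost periods of `f`. -/
def APeriods {α : Type*} (d : α → α → ℝ) (p ε : ℝ) (f : ℝ → α) : Set ℝ :=
  {τ | weylDinf d p f (fun t => f (t + τ)) < ENNReal.ofReal ε}

/-- Membership in the space `W_p(ℝ, α)` of Weyl almost periodic functions of order `p`
w.r.t. the distance `d` (with distinguished point `x₀`). -/
def MemWp {α : Type*} [TopologicalSpace α] (d : α → α → ℝ) (p : ℝ) (x₀ : α)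
    (f : ℝ → α) : Prop :=
  MemMp d p x₀ f ∧ ∀ ε > 0, ∃ l > 0, RelDense (APeriodsL d p l ε f)

/-- The module `Mod f`: the additive group of all `λ ∈ ℝ` such that `e^{iλτ_j} → 1`
for every `f`-returning sequence `{τ_j}` (a sequence with `D^{(d)}_1(f, f(·+τ_j)) → 0`,
where `d` is the relevant bounded distance). -/
def WMod {α : Type*} (d : α → α → ℝ) (f : ℝ → α) : Set ℝ :=
  {lam : ℝ | ∀ τ : ℕ → ℝ,
    Tendsto (fun j => weylDinf d 1 f (fun t => f (t + τ j))) atTop (nhds 0) →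
    Tendsto (fun j => Complex.exp (Complex.I * ((lam * τ j : ℝ) : ℂ))) atTop (nhds 1)}

/-- `κ_W(T) = lim_{l → +∞} sup_ξ (1/l) meas([ξ, ξ+l] ∩ T)` (formalized as a `limsup`). -/
def kappaW (T : Set ℝ) : ℝ≥0∞ :=
  Filter.limsup (fun l : ℝ => ⨆ ξ : ℝ,
    ENNReal.ofReal (1 / l) * MeasureTheory.volume (Set.Icc ξ (ξ + l) ∩ T)) Filter.atTop

/-- Membership in `M*_p(ℝ, α)`. -/
def MemMpStar {α : Type*} [TopologicalSpace α] (d : α → α → ℝ) (p : ℝ) (x₀ : α)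
    (f : ℝ → α) : Prop :=
  MemMp d p x₀ f ∧
  ∀ ε > 0, ∃ δ > 0, ∀ T : Set ℝ, MeasurableSet T → kappaW T < ENNReal.ofReal δ →
    Filter.limsup (fun l : ℝ => ⨆ ξ : ℝ, ENNReal.ofReal (1 / l) *
        ∫⁻ t in Set.Icc ξ (ξ + l) ∩ T, ENNReal.ofReal (d (f t) x₀ ^ p)) Filter.atTop
      < ENNReal.ofReal ε

/-- Distance from a point to a set w.r.t. the distance `d`, valued in `ℝ≥0∞`
(`∞` for the empty set). -/
def dInfDist {α : Type*} (d : α → α → ℝ) (x : α) (K : Set α) : ℝ≥0∞ :=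
  ⨅ y ∈ K, ENNReal.ofReal (d x y)

/-- Membership in `W̃_p(ℝ, α)`: conditions 1) (relatively dense sets of
`(ε, D^{(d)}_p)`-almost periods) and 2) (approximate compactness of values). -/
def MemWpTilde {α : Type*} [TopologicalSpace α] (d : α → α → ℝ) (p : ℝ) (x₀ : α)
    (f : ℝ → α) : Prop :=
  MemMp d p x₀ f ∧
  (∀ ε > 0, RelDense (APeriods d p ε f)) ∧
  (∀ ε > 0, ∀ δ > 0, ∃ K : Set α, IsCompact K ∧
      kappaW {t | ENNReal.ofReal ε ≤ dInfDist d (f t) K} < ENNReal.ofReal δ)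

/-- The support of a Borel measure on a topological space. -/
def measSupport {α : Type*} [TopologicalSpace α] [MeasurableSpace α]
    (μ : Measure α) : Set α :=
  {x | ∀ V : Set α, IsOpen V → x ∈ V → 0 < μ V}

/-- `r_δ(x, μ) = inf { r > 0 : μ[U_r(x)] > δ }`. -/
def rdelta {α : Type*} [PseudoMetricSpace α] [MeasurableSpace α]
    (x : α) (μ : Measure α) (δ : ℝ) : ℝ :=
  sInf {r : ℝ | 0 < r ∧ ENNReal.ofReal δ < μ (Metric.ball x r)}

/-- The Lévy–Prokhorov distance on Borel probability measures. -/
def lpDist {α : Type*} [MeasurableSpace α] [PseudoEMetricSpace α] :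
    ProbabilityMeasure α → ProbabilityMeasure α → ℝ :=
  fun μ ν => MeasureTheory.levyProkhorovDist (μ : Measure α) (ν : Measure α)

end

/-!
Sizes of subsets of the line are measured by the upper Banach density `kappaW`, and almost
periodicity is encoded by filters of return times: a function is almost periodic when its translates
by `τ` converge to it as `τ` runs through the filter.

A naive choice of a point of `F t` by comparing distances with a fixed threshold need not be almost
periodic, because the distances may concentrate at the threshold. The threshold is therefore
multiplied by a dither, a continuous function of `t` on an infinite torus. Its frequencies come from
`Mod h`, and they are so small that the common almost periods of `g` and `F` contain many
translations spreading out each phase; this forces every Lipschitz function of `(g t, F t)` to be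
close to the dither only on a set of small density. The least index whose dithered constraint holds
at `t` is then a label on which almost all of the line agrees with its translates. Iterating the
choice along a countable net of candidate values yields labelled functions that converge uniformly
to a selection.

Finally `dist (f t) x₀` is at most the Hausdorff distance from `F t` to `{x₀}`, so the order `p`
equi-integrability of `F` passes to the selection, and Vitali's theorem upgrades its almost
periodicity in density to order `p`.
-/

section UpperDensity

variable {μ ν : Measure ℝ}

/-- The upper Banach density of a measure on `ℝ`: the asymptotic supremum of its averages over
windows of length `l → ∞`. Both `κ_W` and the Weyl semimetrics are densities of this kind. -/
noncomputable def upperDensity (μ : Measure ℝ) : ℝ≥0∞ :=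
  limsup (fun l : ℝ => ⨆ ξ : ℝ, ENNReal.ofReal (1 / l) * μ (Set.Icc ξ (ξ + l))) atTop

theorem ennreal_limsup_add_le {ι : Type*} {l : Filter ι} (u v : ι → ℝ≥0∞) :
    limsup (fun i => u i + v i) l ≤ limsup u l + limsup v l := by
  refine ENNReal.le_of_forall_pos_le_add fun ε hε hfin => ?_
  obtain ⟨hu, hv⟩ := ENNReal.add_lt_top.1 hfin
  have hε₂ : (ε / 2 : ℝ≥0∞) ≠ 0 := by simpa using hε.ne'
  have hu_lt := eventually_lt_of_limsup_lt (ENNReal.lt_add_right hu.ne hε₂)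
  have hv_lt := eventually_lt_of_limsup_lt (ENNReal.lt_add_right hv.ne hε₂)
  refine limsup_le_of_le (h := ?_)
  filter_upwards [hu_lt, hv_lt] with i hi hi'
  calc u i + v i ≤ (limsup u l + ε / 2) + (limsup v l + ε / 2) := add_le_add hi.le hi'.le
    _ = limsup u l + limsup v l + ε := by rw [add_add_add_comm, ENNReal.add_halves]

theorem upperDensity_mono (h : μ ≤ ν) : upperDensity μ ≤ upperDensity ν :=
  limsup_le_limsup (Eventually.of_forall fun _ => iSup_mono fun _ => by gcongr)

theorem upperDensity_add_le (μ ν : Measure ℝ) :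
    upperDensity (μ + ν) ≤ upperDensity μ + upperDensity ν := by
  refine (limsup_le_limsup (Eventually.of_forall fun l => ?_)).trans (ennreal_limsup_add_le _ _)
  refine iSup_le fun ξ => ?_
  rw [Measure.add_apply, mul_add]
  exact add_le_add (le_iSup (fun ξ => ENNReal.ofReal (1 / l) * μ (Set.Icc ξ (ξ + l))) ξ)
    (le_iSup (fun ξ => ENNReal.ofReal (1 / l) * ν (Set.Icc ξ (ξ + l))) ξ)

theorem upperDensity_zero : upperDensity 0 = 0 := by
  simp [upperDensity]

theorem upperDensity_sum_le {ι : Type*} (s : Finset ι) (μ : ι → Measure ℝ) :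
    upperDensity (∑ i ∈ s, μ i) ≤ ∑ i ∈ s, upperDensity (μ i) :=
  Finset.le_sum_of_subadditive _ upperDensity_zero.le upperDensity_add_le s μ

theorem upperDensity_smul {c : ℝ≥0∞} (hc : c ≠ ∞) (μ : Measure ℝ) :
    upperDensity (c • μ) = c * upperDensity μ := by
  simp only [upperDensity, Measure.smul_apply, smul_eq_mul, mul_left_comm _ c, ← ENNReal.mul_iSup,
    ENNReal.limsup_const_mul_of_ne_top hc]

theorem upperDensity_volume_le : upperDensity volume ≤ 1 := by
  refine limsup_le_of_le (h := ?_)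
  filter_upwards [eventually_gt_atTop 0] with l hl
  refine iSup_le fun ξ => ?_
  rw [Real.volume_Icc, add_sub_cancel_left, ← ENNReal.ofReal_mul (by positivity),
    one_div_mul_cancel hl.ne', ENNReal.ofReal_one]

theorem upperDensity_map_add_right (μ : Measure ℝ) (τ : ℝ) :
    upperDensity (μ.map (· + τ)) = upperDensity μ := by
  simp only [upperDensity, Measure.map_apply (measurable_add_const τ) measurableSet_Icc,
    Set.preimage_add_const_Icc, add_sub_right_comm]
  congr! 2 with l
  exact (Equiv.subRight τ).iSup_comp
    (g := fun ξ => ENNReal.ofReal (1 / l) * μ (Set.Icc ξ (ξ + l)))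

end UpperDensity

section KappaW

variable {S T : Set ℝ}

theorem kappaW_eq_upperDensity (T : Set ℝ) : kappaW T = upperDensity (volume.restrict T) := by
  simp only [kappaW, upperDensity, Measure.restrict_apply measurableSet_Icc]

theorem kappaW_mono (h : S ⊆ T) : kappaW S ≤ kappaW T := by
  simpa only [kappaW_eq_upperDensity] using upperDensity_mono (Measure.restrict_mono_set _ h)

theorem kappaW_congr_ae (h : S =ᵐ[volume] T) : kappaW S = kappaW T := by
  simp only [kappaW_eq_upperDensity, Measure.restrict_congr_set h]

theorem kappaW_empty : kappaW ∅ = 0 := by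
  simp [kappaW_eq_upperDensity, upperDensity_zero]

theorem kappaW_union_le (S T : Set ℝ) : kappaW (S ∪ T) ≤ kappaW S + kappaW T := by
  simp only [kappaW_eq_upperDensity]
  exact (upperDensity_mono (Measure.restrict_union_le S T)).trans (upperDensity_add_le _ _)

theorem kappaW_preimage_add_right (T : Set ℝ) (τ : ℝ) : kappaW {t | t + τ ∈ T} = kappaW T := by
  have hmap : volume.restrict T = (volume.restrict {t | t + τ ∈ T}).map (· + τ) := by
    have := (measurableEmbedding_addRight τ).restrict_map volume T
    rwa [map_add_right_eq_self] at this
  rw [kappaW_eq_upperDensity T, hmap, upperDensity_map_add_right, kappaW_eq_upperDensity]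

theorem volume_Icc_inter_le_translate (E : Set ℝ) (τ ξ l : ℝ) :
    volume (Set.Icc ξ (ξ + l) ∩ E) ≤
      volume (Set.Icc ξ (ξ + l) ∩ {t | t + τ ∈ E}) + ENNReal.ofReal |τ| := by
  have hsub : (· + τ) ⁻¹' (Set.Icc ξ (ξ + l) ∩ E) ⊆ (Set.Icc ξ (ξ + l) ∩ {t | t + τ ∈ E}) ∪
      (Set.Icc (ξ - τ) ξ ∪ Set.Icc (ξ + l) (ξ + l - τ)) := by
    rintro t ⟨⟨hξ, hl⟩, hE⟩
    simp only [Set.mem_union, Set.mem_inter_iff, Set.mem_Icc, Set.mem_ofPred_eq]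
    grind
  have hends : volume (Set.Icc (ξ - τ) ξ ∪ Set.Icc (ξ + l) (ξ + l - τ)) ≤
      ENNReal.ofReal |τ| := by
    refine (measure_union_le _ _).trans_eq ?_
    rw [Real.volume_Icc, Real.volume_Icc, sub_sub_cancel, sub_sub_cancel_left]
    rcases le_total 0 τ with hτ | hτ
    · rw [abs_of_nonneg hτ, ENNReal.ofReal_of_nonpos (neg_nonpos.2 hτ), add_zero]
    · rw [abs_of_nonpos hτ, ENNReal.ofReal_of_nonpos hτ, zero_add]
  calc volume (Set.Icc ξ (ξ + l) ∩ E)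
      = volume ((· + τ) ⁻¹' (Set.Icc ξ (ξ + l) ∩ E)) := (measure_preimage_add_right ..).symm
    _ ≤ volume (Set.Icc ξ (ξ + l) ∩ {t | t + τ ∈ E}) + ENNReal.ofReal |τ| :=
        (measure_mono hsub).trans ((measure_union_le _ _).trans (by gcongr))

theorem kappaW_biUnion_le {ι : Type*} (s : Finset ι) (T : ι → Set ℝ) :
    kappaW (⋃ k ∈ s, T k) ≤ ∑ k ∈ s, kappaW (T k) := by
  classical
  induction s using Finset.induction_on with
  | empty => simp [kappaW_empty]
  | insert k s hk ih =>
    rw [Finset.set_biUnion_insert, Finset.sum_insert hk]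
    exact (kappaW_union_le _ _).trans (add_le_add_right ih _)

/-- Translation changes the mass of a window only near its ends, which is negligible for long
windows. -/
theorem card_mul_kappaW_le {ι : Type*} (s : Finset ι) (τ : ι → ℝ) (E : Set ℝ) :
    s.card * kappaW E ≤ upperDensity (∑ i ∈ s, volume.restrict {t | t + τ i ∈ E}) := by
  set ν : Measure ℝ := ∑ i ∈ s, volume.restrict {t | t + τ i ∈ E} with hν
  have hwindow (ξ l : ℝ) : s.card * volume (Set.Icc ξ (ξ + l) ∩ E) ≤
      ν (Set.Icc ξ (ξ + l)) + ∑ i ∈ s, ENNReal.ofReal |τ i| := by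
    rw [hν, Measure.finsetSum_apply, ← Finset.sum_add_distrib, ← nsmul_eq_mul]
    refine Finset.card_nsmul_le_sum _ _ _ fun i _ => ?_
    rw [Measure.restrict_apply measurableSet_Icc]
    exact volume_Icc_inter_le_translate E (τ i) ξ l
  have hends : Tendsto (fun l : ℝ => ENNReal.ofReal (1 / l) * ∑ i ∈ s, ENNReal.ofReal |τ i|)
      atTop (𝓝 0) := by
    have hinv : Tendsto (fun l : ℝ => ENNReal.ofReal (1 / l)) atTop (𝓝 0) := by
      simpa using ENNReal.tendsto_ofReal (tendsto_const_nhds.div_atTop tendsto_id (a := (1 : ℝ)))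
    simpa using ENNReal.Tendsto.mul_const hinv (.inr (by simp))
  rw [upperDensity, ← ENNReal.limsup_add_of_right_tendsto_zero hends, kappaW,
    ← ENNReal.limsup_const_mul_of_ne_top (ENNReal.natCast_ne_top _)]
  refine limsup_le_limsup (Eventually.of_forall fun l => ?_)
  simp only [Pi.add_apply, ENNReal.mul_iSup, ENNReal.iSup_add]
  refine iSup_mono fun ξ => ?_
  rw [mul_left_comm, ← mul_add]
  gcongr
  exact hwindow ξ l

end KappaW

section ReturnFilter

theorem RelDense.mono {S T : Set ℝ} (hS : RelDense S) (hST : S ⊆ T) : RelDense T :=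
  let ⟨a, ha, h⟩ := hS
  ⟨a, ha, fun ξ => (h ξ).mono (Set.inter_subset_inter_right _ hST)⟩

theorem RelDense.of_forall_exists_sub_mem {S T B : Set ℝ} (hS : RelDense S) (hB : B.Finite)
    (h : ∀ τ ∈ S, ∃ β ∈ B, τ - β ∈ T) : RelDense T := by
  obtain ⟨a, ha, hSa⟩ := hS
  obtain ⟨c, hc⟩ := hB.isBounded.exists_norm_le
  refine ⟨a + 2 * |c|, by positivity, fun ξ => ?_⟩
  obtain ⟨τ, ⟨hξτ, hτξ⟩, hτ⟩ := hSa (ξ + |c|)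
  obtain ⟨β, hβ, hT⟩ := h τ hτ
  have := abs_le.1 ((hc β hβ).trans (le_abs_self c))
  exact ⟨τ - β, ⟨by linarith, by linarith⟩, hT⟩

/-- The abstract properties of the filter of return times of an almost periodic object: its
members are relatively dense, and differences of return times are return times. -/
structure IsReturnFilter (𝓕 : Filter ℝ) : Prop where
  relDense : ∀ S ∈ 𝓕, RelDense S
  tendsto_sub : Tendsto (fun τ : ℝ × ℝ => τ.1 - τ.2) (𝓕 ×ˢ 𝓕) 𝓕

theorem tendsto_sub_inf {𝓕 𝓖 : Filter ℝ}
    (hF : Tendsto (fun τ : ℝ × ℝ => τ.1 - τ.2) (𝓕 ×ˢ 𝓕) 𝓕)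
    (hG : Tendsto (fun τ : ℝ × ℝ => τ.1 - τ.2) (𝓖 ×ˢ 𝓖) 𝓖) :
    Tendsto (fun τ : ℝ × ℝ => τ.1 - τ.2) ((𝓕 ⊓ 𝓖) ×ˢ (𝓕 ⊓ 𝓖)) (𝓕 ⊓ 𝓖) :=
  tendsto_inf.2 ⟨hF.mono_left (prod_mono inf_le_left inf_le_left),
    hG.mono_left (prod_mono inf_le_right inf_le_right)⟩

variable {K : Type*} [AddCommGroup K] [UniformSpace K] [IsUniformAddGroup K]

theorem tendsto_sub_comap_nhds_zero (φ : ℝ →+ K) :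
    Tendsto (fun τ : ℝ × ℝ => τ.1 - τ.2) (comap φ (𝓝 0) ×ˢ comap φ (𝓝 0)) (comap φ (𝓝 0)) := by
  rw [tendsto_comap_iff, Function.comp_def]
  simp only [map_sub]
  have hφ : Tendsto φ (comap φ (𝓝 0)) (𝓝 0) := tendsto_comap
  simpa using (hφ.comp tendsto_fst).sub (hφ.comp tendsto_snd)

/-- Pigeonhole: among return times, finitely many represent all values of `φ` approximately, and
subtracting a representative produces a return time with small `φ`. -/
theorem IsReturnFilter.inf_comap_nhds_zero [CompactSpace K] {𝓕 : Filter ℝ}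
    (h𝓕 : IsReturnFilter 𝓕) (φ : ℝ →+ K) : IsReturnFilter (𝓕 ⊓ comap φ (𝓝 0)) := by
  refine ⟨fun S hS => ?_, tendsto_sub_inf h𝓕.tendsto_sub (tendsto_sub_comap_nhds_zero φ)⟩
  obtain ⟨A, hA, B, ⟨V, hV, hVB⟩, rfl⟩ := mem_inf_iff.1 hS
  obtain ⟨P, hP, hPA⟩ := mem_prod_same_iff.1 (h𝓕.tendsto_sub hA)
  have hVunif : {x : K × K | x.1 - x.2 ∈ V} ∈ uniformity K := by
    rw [uniformity_eq_comap_nhds_zero_swapped]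
    exact ⟨V, hV, fun _ => id⟩
  obtain ⟨Y, hYP, hYfin, hcover⟩ := totallyBounded_iff_subset.1
    (isCompact_univ.totallyBounded.subset (Set.subset_univ (φ '' P))) _ hVunif
  obtain ⟨B', hB'P, hB'fin, rfl⟩ := (Set.exists_subset_image_finite_and (p := (· = Y))).1
    ⟨Y, hYP, hYfin, rfl⟩
  refine (h𝓕.relDense P hP).of_forall_exists_sub_mem hB'fin fun τ hτ => ?_
  obtain ⟨_, ⟨β, hβ, rfl⟩, hτβ⟩ := Set.mem_iUnion₂.1 (hcover (Set.mem_image_of_mem φ hτ))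
  exact ⟨β, hβ, hPA (Set.mk_mem_prod hτ (hB'P hβ)), hVB (by simpa using hτβ)⟩

end ReturnFilter

section DensityReturn

variable {X Y : Type*} [PseudoEMetricSpace X] [PseudoEMetricSpace Y]

/-- The `ε`-almost periods of `D` for convergence in upper density: translating by them moves `D`
by `ε` or more only on a set of upper density less than `ε`. -/
def densityPeriods (D : ℝ → X) (ε : ℝ≥0∞) : Set ℝ :=
  {τ | kappaW {t | ε ≤ edist (D t) (D (t + τ))} < ε}

/-- The filter of return times of `D`: `τ` tends to it when `D (· + τ)` tends to `D` in upper
density. -/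
def densityReturn (D : ℝ → X) : Filter ℝ := ⨅ ε > 0, 𝓟 (densityPeriods D ε)

theorem densityPeriods_mono (D : ℝ → X) : Monotone (densityPeriods D) := fun _ _ h _ hτ =>
  ((kappaW_mono fun _ => h.trans).trans_lt hτ).trans_le h

theorem densityPeriods_congr_ae {D D' : ℝ → X} (h : D =ᵐ[volume] D') (ε : ℝ≥0∞) :
    densityPeriods D ε = densityPeriods D' ε := by
  ext τ
  have hτ : ∀ᵐ t, D (t + τ) = D' (t + τ) :=
    (quasiMeasurePreserving_add_right volume τ).ae h
  have : {t | ε ≤ edist (D t) (D (t + τ))} =ᵐ[volume] {t | ε ≤ edist (D' t) (D' (t + τ))} := by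
    rw [eventuallyEq_set]
    filter_upwards [h, hτ] with t ht htτ
    rw [ht, htτ]
  rw [densityPeriods, densityPeriods, Set.mem_ofPred_eq, Set.mem_ofPred_eq, kappaW_congr_ae this]

theorem densityReturn_congr_ae {D D' : ℝ → X} (h : D =ᵐ[volume] D') :
    densityReturn D = densityReturn D' := by
  simp only [densityReturn, densityPeriods_congr_ae h]

theorem hasBasis_densityReturn (D : ℝ → X) :
    (densityReturn D).HasBasis (fun ε : ℝ≥0∞ => 0 < ε) (densityPeriods D) :=
  hasBasis_biInf_principal (S := Set.Ioi 0)
    (fun ε hε ε' hε' => ⟨min ε ε', Set.mem_Ioi.2 (lt_min hε hε'),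
      densityPeriods_mono D (min_le_left _ _), densityPeriods_mono D (min_le_right _ _)⟩)
    ⟨1, zero_lt_one' ℝ≥0∞⟩

theorem kappaW_union_lt_of_half {S T : Set ℝ} {ε : ℝ≥0∞} (hS : kappaW S < ε / 2)
    (hT : kappaW T < ε / 2) : kappaW (S ∪ T) < ε :=
  (kappaW_union_le S T).trans_lt ((ENNReal.add_lt_add hS hT).trans_eq (ENNReal.add_halves ε))

theorem tendsto_sub_densityReturn (D : ℝ → X) : Tendsto (fun τ : ℝ × ℝ => τ.1 - τ.2)
    (densityReturn D ×ˢ densityReturn D) (densityReturn D) := by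
  refine ((hasBasis_densityReturn D).prod_self.tendsto_iff (hasBasis_densityReturn D)).2
    fun ε hε => ⟨ε / 2, ENNReal.half_pos hε.ne', ?_⟩
  rintro ⟨τ, σ⟩ ⟨hτ, hσ⟩
  rw [densityPeriods, Set.mem_ofPred_eq, ← kappaW_preimage_add_right _ σ]
  refine (kappaW_mono fun t ht => ?_).trans_lt (kappaW_union_lt_of_half hσ hτ)
  by_contra hnot
  simp only [Set.mem_union, Set.mem_ofPred_eq, not_or, not_le] at hnot
  have hlt := ENNReal.add_lt_add hnot.1 hnot.2
  rw [ENNReal.add_halves, edist_comm (D t)] at hlt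
  rw [Set.mem_ofPred_eq, Set.mem_ofPred_eq, add_assoc, add_sub_cancel] at ht
  exact (ht.trans (edist_triangle _ (D t) _)).not_gt hlt

theorem densityReturn_le_of_edist_le {D : ℝ → X} {E : ℝ → Y}
    (h : ∀ s t, edist (E s) (E t) ≤ edist (D s) (D t)) : densityReturn D ≤ densityReturn E :=
  (hasBasis_densityReturn D).le_basis_iff (hasBasis_densityReturn E) |>.2 fun ε hε =>
    ⟨ε, hε, fun _ hτ => (kappaW_mono fun _ ht => ht.trans (h _ _)).trans_lt hτ⟩

theorem densityReturn_prodMk (D : ℝ → X) (E : ℝ → Y) :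
    densityReturn (fun t => (D t, E t)) = densityReturn D ⊓ densityReturn E := by
  refine le_antisymm (le_inf (densityReturn_le_of_edist_le fun _ _ => le_max_left _ _)
    (densityReturn_le_of_edist_le fun _ _ => le_max_right _ _)) ?_
  refine (hasBasis_densityReturn _).ge_iff.2 fun ε hε => ?_
  have hε₂ := ENNReal.half_pos hε.ne'
  refine mem_of_superset (inter_mem_inf ((hasBasis_densityReturn D).mem_of_mem hε₂)
    ((hasBasis_densityReturn E).mem_of_mem hε₂)) fun τ hτ => ?_
  refine (kappaW_mono fun t ht => ?_).trans_lt (kappaW_union_lt_of_half hτ.1 hτ.2)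
  exact (le_max_iff.1 ht).imp ENNReal.half_le_self.trans ENNReal.half_le_self.trans

end DensityReturn

section UnitAddCircle

theorem le_norm_coe_of_mem_Icc {c z : ℝ} (hz : z ∈ Set.Icc c (1 - c)) :
    c ≤ ‖(z : UnitAddCircle)‖ := by
  rw [UnitAddCircle.norm_eq]
  obtain ⟨hcz, hzc⟩ := hz
  rcases le_or_gt (round z) 0 with hround | hround
  · have : (round z : ℝ) ≤ 0 := by exact_mod_cast hround
    exact le_abs.2 (.inl (by linarith))
  · have : (1 : ℝ) ≤ round z := by exact_mod_cast hround
    exact le_abs.2 (.inr (by linarith))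

theorem exists_coe_eq_abs_eq_norm (θ : UnitAddCircle) :
    ∃ y : ℝ, (y : UnitAddCircle) = θ ∧ |y| = ‖θ‖ := by
  obtain ⟨x, rfl⟩ := QuotientAddGroup.mk_surjective θ
  refine ⟨x - round x, ?_, (UnitAddCircle.norm_eq).symm⟩
  have : ((round x : ℝ) : UnitAddCircle) = 0 :=
    (AddCircle.coe_eq_zero_iff 1).2 ⟨round x, by simp⟩
  rw [AddCircle.coe_sub, this, sub_zero]

theorem norm_coe_le_abs (y : ℝ) : ‖(y : UnitAddCircle)‖ ≤ |y| := by
  rw [UnitAddCircle.norm_eq]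
  simpa using round_le y 0

/-- A symmetric pair of arcs of radius less than `ρ` contains at most one point per arc. -/
theorem card_le_two_of_norm_near {ι : Type*} {s : Finset ι} {θ : ι → UnitAddCircle} {r ρ : ℝ}
    (hsep : ∀ i ∈ s, ∀ j ∈ s, i ≠ j → 2 * ρ ≤ ‖θ i - θ j‖)
    (hnear : ∀ i ∈ s, |‖θ i‖ - r| < ρ) : s.card ≤ 2 := by
  by_contra! hcard
  choose y hy habs using fun i => exists_coe_eq_abs_eq_norm (θ i)
  obtain ⟨i, hi, j, hj, hij, hsign⟩ := Finset.exists_ne_map_eq_of_card_lt_of_maps_to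
    (t := (Finset.univ : Finset Bool)) (f := fun i => decide (0 ≤ y i)) (by simpa using hcard)
    (fun _ _ => Finset.mem_univ _)
  rw [decide_eq_decide] at hsign
  have hclose : |y i - y j| < 2 * ρ := by
    have h₁ := abs_lt.1 (hnear i hi)
    have h₂ := abs_lt.1 (hnear j hj)
    rw [← habs] at h₁ h₂
    grind
  refine (hsep i hi j hj hij).not_gt ?_
  calc ‖θ i - θ j‖ = ‖((y i - y j : ℝ) : UnitAddCircle)‖ := by rw [AddCircle.coe_sub, hy, hy]
    _ ≤ |y i - y j| := norm_coe_le_abs _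
    _ < 2 * ρ := hclose

/-- When `x` is small, `x * τ` runs through a fine net of the circle as `τ` runs through a
relatively dense set. -/
theorem RelDense.exists_separated {S : Set ℝ} (hS : RelDense S) {N : ℕ} (hN : 0 < N) :
    ∃ η > 0, ∀ x : ℝ, 0 < x → x < η → ∃ τ : Fin N → ℝ, (∀ i, τ i ∈ S) ∧
      Pairwise fun i j => 1 / (2 * N) ≤ ‖((x * τ i : ℝ) : UnitAddCircle) - (x * τ j : ℝ)‖ := by
  obtain ⟨a, ha, hSa⟩ := hS
  have hN₀ : (0 : ℝ) < N := Nat.cast_pos.2 hN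
  refine ⟨1 / (2 * N) / a, by positivity, fun x hx hxη => ?_⟩
  have hxa : x * a < 1 / (2 * N) := (lt_div_iff₀ ha).1 hxη
  choose τ hτ hτS using fun i : Fin N => hSa (i / N / x)
  have hlow (i : Fin N) : (i : ℝ) / N ≤ x * τ i := by
    rw [mul_comm]
    exact (div_le_iff₀ hx).1 (hτ i).1
  have hhigh (i : Fin N) : x * τ i < i / N + 1 / (2 * N) := by
    calc x * τ i ≤ x * (i / N / x + a) := by gcongr; exact (hτ i).2
      _ = i / N + x * a := by field_simp
      _ < i / N + 1 / (2 * N) := by gcongr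
  refine ⟨τ, hτS, ?_⟩
  suffices ∀ i j : Fin N, j < i →
      1 / (2 * N) ≤ ‖((x * τ i : ℝ) : UnitAddCircle) - (x * τ j : ℝ)‖ by
    intro i j hij
    rcases hij.lt_or_gt with h | h
    · rw [norm_sub_rev]
      exact this j i h
    · exact this i j h
  intro i j hji
  have hstep : (j : ℝ) / N + 1 / N ≤ i / N := by
    rw [← add_div]
    gcongr
    exact_mod_cast hji
  have hwrap : (i : ℝ) / N + 1 / N ≤ 1 := by
    rw [← add_div, div_le_one hN₀]
    exact_mod_cast i.2
  have hhalf : 1 / (2 * N : ℝ) + 1 / (2 * N) = 1 / N := by field_simp; norm_num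
  have hj : 0 ≤ (j : ℝ) / N := by positivity
  rw [← AddCircle.coe_sub]
  exact le_norm_coe_of_mem_Icc
    ⟨by linarith [hlow i, hhigh j], by linarith [hlow j, hhigh i]⟩

end UnitAddCircle

section Dither

/-- The amplitudes of the dither series. They decay so fast that each term dominates the sum of
all later ones, even at the resolution `2⁻ᵏ` at which the `k`-th phase is sampled. -/
noncomputable def amp (k : ℕ) : ℝ := (1 / 2) ^ (k + 2) ^ 2

theorem amp_pos (k : ℕ) : 0 < amp k := by
  unfold amp
  positivity

theorem amp_succ (k : ℕ) : amp (k + 1) = amp k * (1 / 2) ^ (2 * k + 5) := by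
  rw [amp, amp, ← pow_add]
  ring_nf

theorem amp_add_le (k j : ℕ) : amp (k + j) ≤ amp k * (1 / 2) ^ j := by
  rw [amp, amp, ← pow_add]
  exact pow_le_pow_of_le_one (by norm_num) (by norm_num) (by lia)

theorem summable_amp : Summable amp :=
  .of_nonneg_of_le (fun k => (amp_pos k).le) (fun j => by simpa using amp_add_le 0 j)
    (summable_geometric_two.mul_left _)

theorem tsum_amp_add_le (k : ℕ) : ∑' j, amp (j + k) ≤ 2 * amp k := by
  calc ∑' j, amp (j + k) ≤ ∑' j, amp k * (1 / 2) ^ j :=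
        ((summable_nat_add_iff k).2 summable_amp).tsum_le_tsum
          (fun j => add_comm j k ▸ amp_add_le k j) (summable_geometric_two.mul_left _)
    _ = 2 * amp k := by rw [tsum_mul_left, tsum_geometric_two, mul_comm]

/-- A number in `[1/2, 1]` attached to a point of the infinite torus, used to randomize thresholds:
along the orbits constructed below it avoids the values of a given almost periodic function. -/
noncomputable def dither (θ : ℕ → UnitAddCircle) : ℝ := 1 / 2 + ∑' k, amp k * ‖θ k‖

theorem amp_mul_norm_le (k : ℕ) (θ : UnitAddCircle) : amp k * ‖θ‖ ≤ amp k / 2 := by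
  have hθ : ‖θ‖ ≤ 1 / 2 := by simpa using AddCircle.norm_le_half_period 1 one_ne_zero (x := θ)
  linarith [mul_le_mul_of_nonneg_left hθ (amp_pos k).le]

theorem continuous_dither : Continuous dither := by
  refine continuous_const.add (continuous_tsum (by fun_prop)
    (summable_amp.div_const 2) fun k θ => ?_)
  rw [Real.norm_of_nonneg (mul_nonneg (amp_pos k).le (norm_nonneg _))]
  exact amp_mul_norm_le k _

theorem eventually_abs_dither_add_sub_lt {ε : ℝ} (hε : 0 < ε) :
    ∀ᶠ υ : ℕ → UnitAddCircle in 𝓝 0, ∀ θ, |dither (θ + υ) - dither θ| < ε := by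
  have hunif := CompactSpace.uniformContinuous_of_continuous continuous_dither
  have := hunif (Metric.dist_mem_uniformity hε)
  rw [mem_map, uniformity_eq_comap_nhds_zero_swapped, mem_comap] at this
  obtain ⟨V, hV, hsub⟩ := this
  filter_upwards [hV] with υ hυ θ
  exact @hsub (θ + υ, θ) (by simpa using hυ)

theorem dither_sub_sum_mem_Icc (θ : ℕ → UnitAddCircle) (k : ℕ) :
    dither θ - (1 / 2 + ∑ j ∈ Finset.range k, amp j * ‖θ j‖) ∈ Set.Icc 0 (amp k) := by
  have hnonneg (j : ℕ) : 0 ≤ amp j * ‖θ j‖ := mul_nonneg (amp_pos j).le (norm_nonneg _)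
  have hsum : Summable fun j => amp j * ‖θ j‖ :=
    .of_nonneg_of_le hnonneg (fun j => amp_mul_norm_le j _) (summable_amp.div_const 2)
  have htail : ∑' j, amp (j + k) * ‖θ (j + k)‖ ≤ amp k := by
    calc ∑' j, amp (j + k) * ‖θ (j + k)‖ ≤ ∑' j, amp (j + k) / 2 :=
          ((summable_nat_add_iff k).2 hsum).tsum_le_tsum (fun j => amp_mul_norm_le _ _)
            (((summable_nat_add_iff k).2 summable_amp).div_const 2)
      _ ≤ amp k := by
          rw [tsum_div_const]
          linarith [tsum_amp_add_le k]
  rw [dither, add_sub_add_left_eq_sub, ← hsum.sum_add_tsum_nat_add k, add_sub_cancel_left]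
  exact ⟨tsum_nonneg fun j => hnonneg _, htail⟩

theorem dither_mem_Icc (θ : ℕ → UnitAddCircle) : dither θ ∈ Set.Icc (1 / 2) 1 := by
  have h := dither_sub_sum_mem_Icc θ 0
  have hamp : amp 0 ≤ 1 / 2 := by norm_num [amp]
  rw [Finset.sum_range_zero, add_zero] at h
  exact ⟨sub_nonneg.1 h.1, by linarith [h.2]⟩

end Dither

section Dispersing

theorem exists_seq_of_forall_prefix {α : Type*} {R : ∀ n : ℕ, (Fin n → α) → α → Prop}
    (h : ∀ n v, ∃ x, R n v x) : ∃ a : ℕ → α, ∀ n, R n (fun j => a j) (a n) := by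
  choose next hnext using h
  let a : ℕ → α := Nat.strongRec fun n ih => next n fun j => ih j j.2
  have ha (n : ℕ) : a n = next n fun j => a j := Nat.strongRec_eq _ n
  exact ⟨a, fun n => ha n ▸ hnext n _⟩

/-- The linear flow with frequencies `a` on a torus. -/
noncomputable def torusHom {ι : Type*} (a : ι → ℝ) : ℝ →+ (ι → UnitAddCircle) :=
  AddMonoidHom.mk' (fun τ k => ((a k * τ : ℝ) : UnitAddCircle)) fun τ σ => by
    ext k
    rw [mul_add, AddCircle.coe_add, Pi.add_apply]

theorem continuous_torusHom {ι : Type*} (a : ι → ℝ) : Continuous (torusHom a) :=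
  continuous_pi fun k => (AddCircle.continuous_mk' 1).comp (continuous_const_mul (a k))

/-- The frequencies `a` disperse the sets `P k` if `P k` contains `2ᵏ` translations that barely
move the first `k` phases of the flow while separating the values of the `k`-th phase. -/
def Dispersing (P : ℕ → Set ℝ) (a : ℕ → ℝ) : Prop :=
  ∀ k, ∃ τ : Fin (2 ^ k) → ℝ, (∀ i, τ i ∈ P k ∧ ∀ j < k, ‖torusHom a (τ i) j‖ < amp (k + 2)) ∧
    Pairwise fun i j => 1 / (2 * 2 ^ k) ≤ ‖torusHom a (τ i) k - torusHom a (τ j) k‖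

theorem exists_dispersing {𝓕 : Filter ℝ} (h𝓕 : IsReturnFilter 𝓕) {P : ℕ → Set ℝ}
    (hP : ∀ k, P k ∈ 𝓕) {M : Set ℝ} (hM : ∀ η > 0, ∃ x ∈ M, 0 < x ∧ x < η) :
    ∃ a : ℕ → ℝ, (∀ k, a k ∈ M) ∧ Dispersing P a := by
  have hstep (k : ℕ) (v : Fin k → ℝ) : ∃ x ∈ M, ∃ τ : Fin (2 ^ k) → ℝ,
      (∀ i, τ i ∈ P k ∧ ∀ j, ‖torusHom v (τ i) j‖ < amp (k + 2)) ∧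
      Pairwise fun i j =>
        1 / (2 * 2 ^ k) ≤ ‖((x * τ i : ℝ) : UnitAddCircle) - (x * τ j : ℝ)‖ := by
    have hsmall : ∀ᶠ θ : Fin k → UnitAddCircle in 𝓝 0, ∀ j, ‖θ j‖ < amp (k + 2) := by
      refine eventually_all.2 fun j => ?_
      have hnorm : Tendsto (fun θ : Fin k → UnitAddCircle => ‖θ j‖) (𝓝 0) (𝓝 0) := by
        simpa using ((continuous_apply j).norm.tendsto (0 : Fin k → UnitAddCircle))
      exact hnorm.eventually_lt_const (amp_pos _)
    obtain ⟨η, hη, hsep⟩ := ((h𝓕.inf_comap_nhds_zero (torusHom v)).relDense _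
      (inter_mem_inf (hP k) (preimage_mem_comap hsmall))).exists_separated (N := 2 ^ k)
      (by positivity)
    obtain ⟨x, hxM, hx₀, hxη⟩ := hM η hη
    obtain ⟨τ, hτ, hτsep⟩ := hsep x hx₀ hxη
    exact ⟨x, hxM, τ, hτ, by exact_mod_cast hτsep⟩
  obtain ⟨a, ha⟩ := exists_seq_of_forall_prefix hstep
  refine ⟨a, fun k => (ha k).1, fun k => ?_⟩
  obtain ⟨τ, hτ, hsep⟩ := (ha k).2
  exact ⟨τ, fun i => ⟨(hτ i).1, fun j hj => (hτ i).2 ⟨j, hj⟩⟩, hsep⟩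

theorem exists_abs_dither_add_sub_le (θ : ℕ → UnitAddCircle) (k : ℕ) :
    ∃ c, ∀ υ : ℕ → UnitAddCircle, (∀ j < k, ‖υ j‖ < amp (k + 2)) →
      |dither (θ + υ) - c - amp k * ‖θ k + υ k‖| ≤ 2 * amp (k + 1) := by
  refine ⟨1 / 2 + ∑ j ∈ Finset.range k, amp j * ‖θ j‖, fun υ hυ => ?_⟩
  have hamp : ∑ j ∈ Finset.range k, amp j ≤ 1 := by
    have h₀ : ∑' j, amp (j + 0) ≤ 2 * amp 0 := tsum_amp_add_le 0
    have : 2 * amp 0 ≤ 1 := by norm_num [amp]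
    exact (summable_amp.sum_le_tsum _ fun j _ => (amp_pos j).le).trans (h₀.trans this)
  have hprefix : |∑ j ∈ Finset.range k, amp j * ‖(θ + υ) j‖ -
      ∑ j ∈ Finset.range k, amp j * ‖θ j‖| ≤ amp (k + 1) := by
    rw [← Finset.sum_sub_distrib]
    calc |∑ j ∈ Finset.range k, (amp j * ‖(θ + υ) j‖ - amp j * ‖θ j‖)|
        ≤ ∑ j ∈ Finset.range k, amp j * amp (k + 2) := by
          refine (Finset.abs_sum_le_sum_abs _ _).trans (Finset.sum_le_sum fun j hj => ?_)
          rw [← mul_sub, abs_mul, abs_of_pos (amp_pos j)]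
          refine mul_le_mul_of_nonneg_left ?_ (amp_pos j).le
          refine (abs_norm_sub_norm_le _ _).trans ?_
          simpa using (hυ j (Finset.mem_range.1 hj)).le
      _ ≤ amp (k + 2) := by
          rw [← Finset.sum_mul]
          exact mul_le_of_le_one_left (amp_pos _).le hamp
      _ ≤ amp (k + 1) := by linarith [amp_add_le (k + 1) 1, amp_pos (k + 1)]
  have htail := dither_sub_sum_mem_Icc (θ + υ) (k + 1)
  rw [Finset.sum_range_succ, Pi.add_apply] at htail
  have hp := abs_le.1 hprefix
  rw [abs_le]
  constructor <;> linarith [htail.1, htail.2, hp.1, hp.2]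

theorem card_near_dither_le {ι : Type*} {s : Finset ι} {θ : ℕ → UnitAddCircle}
    {υ : ι → ℕ → UnitAddCircle} {k : ℕ} (hυ : ∀ i, ∀ j < k, ‖υ i j‖ < amp (k + 2))
    (hsep : Pairwise fun i j => 1 / (2 * 2 ^ k) ≤ ‖υ i k - υ j k‖) {v : ℝ}
    (hv : ∀ i ∈ s, |v - dither (θ + υ i)| < 2 * amp (k + 1)) : s.card ≤ 2 := by
  obtain ⟨c, hc⟩ := exists_abs_dither_add_sub_le θ k
  refine card_le_two_of_norm_near (θ := fun i => θ k + υ i k) (r := (v - c) / amp k)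
    (ρ := 1 / (4 * 2 ^ k)) (fun i _ j _ hij => ?_) fun i hi => ?_
  · rw [add_sub_add_left_eq_sub]
    exact (hsep hij).trans_eq' (by ring)
  have hclose : |amp k * ‖θ k + υ i k‖ - (v - c)| < 4 * amp (k + 1) := by
    have h₁ := abs_le.1 (hc (υ i) (hυ i))
    have h₂ := abs_lt.1 (hv i hi)
    exact abs_lt.2 ⟨by linarith [h₁.1, h₁.2, h₂.1, h₂.2], by linarith [h₁.1, h₁.2, h₂.1, h₂.2]⟩
  have hscale : 4 * amp (k + 1) ≤ 1 / (4 * 2 ^ k) * amp k := by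
    have : (1 / 2 : ℝ) ^ (2 * k + 5) ≤ (1 / 2) ^ (k + 4) :=
      pow_le_pow_of_le_one (by norm_num) (by norm_num) (by lia)
    calc 4 * amp (k + 1) ≤ 4 * (amp k * (1 / 2) ^ (k + 4)) := by
          rw [amp_succ]
          gcongr
          exact (amp_pos k).le
      _ = 1 / (4 * 2 ^ k) * amp k := by
          rw [pow_add, one_div_pow]
          ring
  have hk := amp_pos k
  calc |‖θ k + υ i k‖ - (v - c) / amp k|
      = |amp k * ‖θ k + υ i k‖ - (v - c)| / amp k := by
        rw [← abs_of_pos hk, ← abs_div, abs_of_pos hk, sub_div (amp k * _),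
          mul_div_cancel_left₀ _ hk.ne']
    _ < 1 / (4 * 2 ^ k) := (div_lt_iff₀ hk).2 (hclose.trans_le hscale)

end Dispersing

section AntiConcentration

theorem card_mul_kappaW_le_of_overlap {ι : Type*} [Fintype ι] {τ : ι → ℝ} {E : Set ℝ}
    {G B : ι → Set ℝ} {m : ℕ} (hG : ∀ i, MeasurableSet (G i))
    (hcover : ∀ i, {t | t + τ i ∈ E} ⊆ G i ∪ B i) (hoverlap : ∀ t, {i | t ∈ G i}.encard ≤ m) :
    Fintype.card ι * kappaW E ≤ m + ∑ i, kappaW (B i) := by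
  have hG_le : ∑ i, volume.restrict (G i) ≤ (m : ℝ≥0∞) • volume := by
    rw [← Measure.sum_fintype, Nat.cast_smul_eq_nsmul]
    exact (Measure.sum_restrict_le hG hoverlap).trans (by gcongr; exact Measure.restrict_le_self)
  calc Fintype.card ι * kappaW E
      ≤ upperDensity (∑ i, volume.restrict {t | t + τ i ∈ E}) := card_mul_kappaW_le _ τ E
    _ ≤ upperDensity (∑ i, volume.restrict (G i) + ∑ i, volume.restrict (B i)) := by
        rw [← Finset.sum_add_distrib]
        exact upperDensity_mono (Finset.sum_le_sum fun i _ =>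
          (Measure.restrict_mono_set _ (hcover i)).trans (Measure.restrict_union_le _ _))
    _ ≤ upperDensity ((m : ℝ≥0∞) • volume) + ∑ i, upperDensity (volume.restrict (B i)) :=
        (upperDensity_add_le _ _).trans
          (add_le_add (upperDensity_mono hG_le) (upperDensity_sum_le _ _))
    _ ≤ m + ∑ i, kappaW (B i) := by
        rw [upperDensity_smul (ENNReal.natCast_ne_top m)]
        simp only [kappaW_eq_upperDensity]
        gcongr
        exact mul_le_of_le_one_right' upperDensity_volume_le

variable {X : Type*} [PseudoEMetricSpace X] {D : ℝ → X} {a : ℕ → ℝ} {Ψ : X → ℝ} {L : NNReal}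

theorem two_pow_mul_amp_le (k : ℕ) : 2 ^ k * amp (k + 2) ≤ amp (k + 1) := by
  have : (2 : ℝ) ^ k * (1 / 2) ^ (2 * (k + 1) + 5) ≤ 1 := by
    calc (2 : ℝ) ^ k * (1 / 2) ^ (2 * (k + 1) + 5) ≤ 2 ^ k * (1 / 2) ^ k := by
          gcongr 2 ^ k * ?_
          exact pow_le_pow_of_le_one (by norm_num) (by norm_num) (by lia)
      _ = 1 := by rw [← mul_pow]; norm_num
  rw [amp_succ (k + 1), mul_left_comm]
  exact mul_le_of_le_one_right (amp_pos _).le this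

theorem dist_lt_amp_of_edist_lt (hΨ : LipschitzWith L Ψ) {k : ℕ} (hk : L ≤ 2 ^ k) {x y : X}
    (h : edist x y < ENNReal.ofReal (amp (k + 2))) : dist (Ψ x) (Ψ y) < amp (k + 1) := by
  rw [← edist_lt_ofReal]
  calc edist (Ψ x) (Ψ y) ≤ 2 ^ k * edist x y := (hΨ _ _).trans (by gcongr; exact_mod_cast hk)
    _ < 2 ^ k * ENNReal.ofReal (amp (k + 2)) :=
        (ENNReal.mul_lt_mul_iff_right (by simp) (by simp)).2 h
    _ = ENNReal.ofReal (2 ^ k * amp (k + 2)) := by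
        rw [ENNReal.ofReal_mul (by positivity), ENNReal.ofReal_pow zero_le_two,
          ENNReal.ofReal_ofNat]
    _ ≤ ENNReal.ofReal (amp (k + 1)) := ENNReal.ofReal_le_ofReal (two_pow_mul_amp_le k)

theorem encard_near_dither_le (hΨ : LipschitzWith L Ψ) {k : ℕ} (hk : L ≤ 2 ^ k)
    {ι : Type*} [Finite ι] {τ : ι → ℝ} (hτ : ∀ i, ∀ j < k, ‖torusHom a (τ i) j‖ < amp (k + 2))
    (hsep : Pairwise fun i j => 1 / (2 * 2 ^ k) ≤ ‖torusHom a (τ i) k - torusHom a (τ j) k‖)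
    (t : ℝ) : {i | |Ψ (D (t + τ i)) - dither (torusHom a (t + τ i))| < amp (k + 1) ∧
      edist (D t) (D (t + τ i)) < ENNReal.ofReal (amp (k + 2))}.encard ≤ (2 : ℕ) := by
  rw [Set.encard_le_coe_iff_finite_ncard_le]
  refine ⟨Set.toFinite _, ?_⟩
  rw [Set.ncard_eq_toFinset_card _ (Set.toFinite _)]
  refine card_near_dither_le (θ := torusHom a t) (υ := fun i => torusHom a (τ i)) hτ hsep
    (v := Ψ (D t)) fun i hi => ?_
  obtain ⟨hnear, hperiod⟩ := (Set.Finite.mem_toFinset _).1 hi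
  rw [← map_add]
  calc |Ψ (D t) - dither (torusHom a (t + τ i))|
      ≤ |Ψ (D t) - Ψ (D (t + τ i))| + |Ψ (D (t + τ i)) - dither (torusHom a (t + τ i))| :=
        abs_sub_le _ _ _
    _ < amp (k + 1) + amp (k + 1) := add_lt_add (dist_lt_amp_of_edist_lt hΨ hk hperiod) hnear
    _ = 2 * amp (k + 1) := (two_mul _).symm

/-- The `2ᵏ` dispersing translations barely move `D` and the phases before the `k`-th but separate
the `k`-th phases, so at most two of them bring the dither near the value of `Ψ (D t)`. -/
theorem two_pow_mul_kappaW_near_dither_le (hD : StronglyMeasurable D)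
    (ha : Dispersing (fun k => densityPeriods D (ENNReal.ofReal (amp (k + 2)))) a)
    (hΨ : LipschitzWith L Ψ) {k : ℕ} (hk : L ≤ 2 ^ k) :
    2 ^ k * kappaW {t | |Ψ (D t) - dither (torusHom a t)| < amp (k + 1)} ≤ 3 := by
  obtain ⟨τ, hτ, hsep⟩ := ha k
  set E := {t | |Ψ (D t) - dither (torusHom a t)| < amp (k + 1)}
  set B : Fin (2 ^ k) → Set ℝ :=
    fun i => {t | ENNReal.ofReal (amp (k + 2)) ≤ edist (D t) (D (t + τ i))}
  have hE : MeasurableSet E :=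
    (((hΨ.continuous.comp_stronglyMeasurable hD).measurable.sub
      (continuous_dither.comp (continuous_torusHom a)).measurable).norm) measurableSet_Iio
  have hB (i : Fin (2 ^ k)) : MeasurableSet (B i) :=
    (hD.edist (hD.comp_measurable (measurable_add_const (τ i)))).measurable measurableSet_Ici
  have hsum : ∑ i, kappaW (B i) ≤ 1 := by
    calc ∑ i, kappaW (B i) ≤ ∑ _i : Fin (2 ^ k), ENNReal.ofReal (amp (k + 2)) :=
          Finset.sum_le_sum fun i _ => (hτ i).1.le
      _ = ENNReal.ofReal (2 ^ k * amp (k + 2)) := by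
          rw [Finset.sum_const, nsmul_eq_mul, ENNReal.ofReal_mul (by positivity)]
          simp
      _ ≤ 1 := ENNReal.ofReal_le_one.2
          ((two_pow_mul_amp_le k).trans (pow_le_one₀ (by norm_num) (by norm_num)))
  calc 2 ^ k * kappaW E = Fintype.card (Fin (2 ^ k)) * kappaW E := by simp
    _ ≤ (2 : ℕ) + ∑ i, kappaW (B i) :=
        card_mul_kappaW_le_of_overlap (τ := τ) (G := fun i => {t | t + τ i ∈ E} \ B i)
          (fun i => (measurable_add_const (τ i) hE).diff (hB i)) (fun i => by simp)
          fun t => by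
            simpa [E, B] using encard_near_dither_le (D := D) hΨ hk (fun i => (hτ i).2) hsep t
    _ ≤ 2 + 1 := by gcongr; simp
    _ = 3 := by norm_num

theorem exists_kappaW_near_dither_le (hD : StronglyMeasurable D)
    (ha : Dispersing (fun k => densityPeriods D (ENNReal.ofReal (amp (k + 2)))) a)
    (hΨ : LipschitzWith L Ψ) {σ : ℝ≥0∞} (hσ : 0 < σ) :
    ∃ ε > 0, kappaW {t | |Ψ (D t) - dither (torusHom a t)| < ε} ≤ σ := by
  obtain ⟨k, hLk, hσk⟩ : ∃ k : ℕ, L ≤ 2 ^ k ∧ 3 / 2 ^ k ≤ σ := by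
    have hL : ∀ᶠ k : ℕ in atTop, L ≤ 2 ^ k :=
      (tendsto_pow_atTop_atTop_of_one_lt one_lt_two).eventually_ge_atTop L
    have hσ' : ∀ᶠ k : ℕ in atTop, 3 * 2⁻¹ ^ k < σ := by
      have := ENNReal.Tendsto.const_mul (a := 3) (ENNReal.tendsto_pow_atTop_nhds_zero_of_lt_one
        (r := 2⁻¹) (by simp)) (.inr (by simp))
      exact this.eventually_lt_const (by simpa using hσ)
    obtain ⟨k, hLk, hσk⟩ := (hL.and hσ').exists
    exact ⟨k, hLk, by simpa [div_eq_mul_inv, ENNReal.inv_pow] using hσk.le⟩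
  refine ⟨amp (k + 1), amp_pos _, ?_⟩
  refine ((ENNReal.le_div_iff_mul_le (by simp) (by simp)).2 ?_).trans hσk
  rw [mul_comm]
  exact two_pow_mul_kappaW_near_dither_le hD ha hΨ hLk

end AntiConcentration

section AlmostInvariant

variable {β γ : Type*} {𝓢 : Filter ℝ}

/-- `f` is almost invariant along `𝓢` if translating it by `τ` changes its value only on a set
whose upper density vanishes as `τ` tends to `𝓢`. -/
def AlmostInvariant (𝓢 : Filter ℝ) (f : ℝ → β) : Prop :=
  Tendsto (fun τ => kappaW {t | f t ≠ f (t + τ)}) 𝓢 (𝓝 0)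

theorem AlmostInvariant.comp {f : ℝ → β} (hf : AlmostInvariant 𝓢 f) (φ : β → γ) :
    AlmostInvariant 𝓢 fun t => φ (f t) :=
  tendsto_of_tendsto_of_tendsto_of_le_of_le tendsto_const_nhds hf (fun _ => zero_le)
    fun _ => kappaW_mono fun _ => mt (congrArg φ)

theorem AlmostInvariant.prodMk {f : ℝ → β} {g : ℝ → γ} (hf : AlmostInvariant 𝓢 f)
    (hg : AlmostInvariant 𝓢 g) : AlmostInvariant 𝓢 fun t => (f t, g t) := by
  have hsum := hf.add hg
  rw [add_zero] at hsum
  refine tendsto_of_tendsto_of_tendsto_of_le_of_le tendsto_const_nhds hsum (fun _ => zero_le)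
    fun τ => (kappaW_mono fun t ht => ?_).trans (kappaW_union_le _ _)
  exact not_and_or.1 fun heq => ht (Prod.ext heq.1 heq.2)

theorem lt_iff_lt_of_abs_sub_lt {x x' y y' ε : ℝ} (hxy : ε ≤ |x - y|) (hx : |x - x'| < ε / 2)
    (hy : |y' - y| < ε / 2) : x < y ↔ x' < y' := by
  rw [abs_lt] at hx hy
  rcases le_abs.1 hxy with h | h <;> constructor <;> intro <;> linarith

theorem almostInvariant_lt_mul_dither {X : Type*} [PseudoEMetricSpace X] {D : ℝ → X}
    {a : ℕ → ℝ} {Ψ : X → ℝ} {L : NNReal} (hD : StronglyMeasurable D)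
    (ha : Dispersing (fun k => densityPeriods D (ENNReal.ofReal (amp (k + 2)))) a)
    (hΨ : LipschitzWith L Ψ) {r : ℝ} (hr : 0 < r) :
    AlmostInvariant (densityReturn D ⊓ comap (torusHom a) (𝓝 0))
      fun t => Ψ (D t) < r * dither (torusHom a t) := by
  have hΨr : LipschitzWith (‖r⁻¹‖₊ * L) fun x => r⁻¹ * Ψ x := (lipschitzWith_smul r⁻¹).comp hΨ
  refine ENNReal.tendsto_nhds_zero.2 fun σ hσ => ?_
  have hσ₂ := ENNReal.half_pos hσ.ne'
  obtain ⟨ε, hε, hnear⟩ := exists_kappaW_near_dither_le hD ha hΨr hσ₂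
  obtain ⟨η, hη, hΨη⟩ := EMetric.uniformContinuous_iff.1 hΨr.uniformContinuous
    (ENNReal.ofReal (ε / 2)) (by simpa using hε)
  have hperiod : ∀ᶠ τ in densityReturn D, τ ∈ densityPeriods D (min η (σ / 2)) :=
    (hasBasis_densityReturn D).mem_of_mem (lt_min hη hσ₂)
  have hdither := tendsto_comap.eventually (eventually_abs_dither_add_sub_lt (half_pos hε))
    (f := torusHom a)
  filter_upwards [hperiod.filter_mono inf_le_left, hdither.filter_mono inf_le_right]
    with τ hτ hυ
  have hmove : kappaW {t | η ≤ edist (D t) (D (t + τ))} ≤ σ / 2 :=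
    calc kappaW {t | η ≤ edist (D t) (D (t + τ))}
        ≤ kappaW {t | min η (σ / 2) ≤ edist (D t) (D (t + τ))} :=
          kappaW_mono fun t => (min_le_left η (σ / 2)).trans
      _ ≤ min η (σ / 2) := le_of_lt hτ
      _ ≤ σ / 2 := min_le_right _ _
  calc kappaW {t | (Ψ (D t) < r * dither (torusHom a t)) ≠
          (Ψ (D (t + τ)) < r * dither (torusHom a (t + τ)))}
      ≤ kappaW ({t | |r⁻¹ * Ψ (D t) - dither (torusHom a t)| < ε} ∪
          {t | η ≤ edist (D t) (D (t + τ))}) := by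
        refine kappaW_mono fun t hflip => ?_
        by_contra hnot
        simp only [Set.mem_union, Set.mem_ofPred_eq, not_or, not_lt, not_le] at hnot
        refine hflip (propext ?_)
        rw [map_add, ← inv_mul_lt_iff₀ hr, ← inv_mul_lt_iff₀ hr]
        exact lt_iff_lt_of_abs_sub_lt hnot.1 (edist_lt_ofReal.1 (hΨη hnot.2))
          (hυ (torusHom a t))
    _ ≤ σ / 2 + σ / 2 := (kappaW_union_le _ _).trans (add_le_add hnear hmove)
    _ = σ := ENNReal.add_halves σ

end AlmostInvariant

section TightInDensity

variable {X Y : Type*} [PseudoEMetricSpace X] [PseudoEMetricSpace Y]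

/-- `f` takes values near a finite set outside of sets of small upper density. -/
def TightInDensity (f : ℝ → X) : Prop :=
  ∀ ε > 0, ∀ σ > 0, ∃ S : Set X, S.Finite ∧ kappaW {t | ∀ z ∈ S, ε ≤ edist (f t) z} ≤ σ

theorem TightInDensity.congr_ae {f g : ℝ → X} (hf : TightInDensity f) (hfg : f =ᵐ[volume] g) :
    TightInDensity g := fun ε hε σ hσ => by
  obtain ⟨S, hS, hκ⟩ := hf ε hε σ hσ
  refine ⟨S, hS, (kappaW_congr_ae ?_).trans_le hκ⟩
  rw [eventuallyEq_set]
  filter_upwards [hfg] with t ht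
  rw [ht]

theorem TightInDensity.prodMk {f : ℝ → X} {g : ℝ → Y} (hf : TightInDensity f)
    (hg : TightInDensity g) : TightInDensity fun t => (f t, g t) := fun ε hε σ hσ => by
  have hσ₂ := ENNReal.half_pos hσ.ne'
  obtain ⟨S, hS, hκS⟩ := hf ε hε _ hσ₂
  obtain ⟨T, hT, hκT⟩ := hg ε hε _ hσ₂
  refine ⟨S ×ˢ T, hS.prod hT, ?_⟩
  calc kappaW {t | ∀ z ∈ S ×ˢ T, ε ≤ edist (f t, g t) z}
      ≤ kappaW ({t | ∀ z ∈ S, ε ≤ edist (f t) z} ∪ {t | ∀ z ∈ T, ε ≤ edist (g t) z}) := by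
        refine kappaW_mono fun t ht => ?_
        by_contra hnot
        simp only [Set.mem_union, Set.mem_ofPred_eq, not_or, not_forall, not_le] at hnot
        obtain ⟨⟨z, hz, hfz⟩, w, hw, hgw⟩ := hnot
        exact (ht (z, w) ⟨hz, hw⟩).not_gt (max_lt hfz hgw)
    _ ≤ σ / 2 + σ / 2 := (kappaW_union_le _ _).trans (add_le_add hκS hκT)
    _ = σ := ENNReal.add_halves σ

theorem nat_eq_of_edist_lt_one {m n : ℕ} (h : edist m n < 1) : m = n := by
  by_contra hne
  refine h.not_ge ?_
  rw [edist_dist, ENNReal.one_le_ofReal]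
  exact Nat.pairwise_one_le_dist hne

theorem tightInDensity_nat_iff {i : ℝ → ℕ} :
    TightInDensity i ↔ ∀ σ > 0, ∃ N, kappaW {t | N < i t} ≤ σ := by
  refine ⟨fun hi σ hσ => ?_, fun hi ε hε σ hσ => ?_⟩
  · obtain ⟨S, hS, hκ⟩ := hi 1 one_pos σ hσ
    obtain ⟨N, hN⟩ := hS.bddAbove
    refine ⟨N, (kappaW_mono fun t ht => ?_).trans hκ⟩
    intro z hz
    by_contra hlt
    exact (lt_of_le_of_lt (hN hz) ht).ne' (nat_eq_of_edist_lt_one (not_le.1 hlt))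
  · obtain ⟨N, hN⟩ := hi σ hσ
    refine ⟨Set.Iic N, Set.finite_Iic N, (kappaW_mono fun t ht => ?_).trans hN⟩
    by_contra hle
    exact hε.not_ge ((ht (i t) (Set.mem_Iic.2 (not_lt.1 hle))).trans_eq (edist_self _))

end TightInDensity

section RegularLabel

variable {X : Type*} [PseudoEMetricSpace X] {𝓢 : Filter ℝ} {R : ℝ → ℕ → Prop}

/-- The label of `t` is the least index admissible for `t`, and `0` if there is none. -/
noncomputable def leastIndex (R : ℝ → ℕ → Prop) (t : ℝ) : ℕ := sInf {k | R t k}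

theorem measurable_leastIndex (hR : ∀ t, ∃ k, R t k) (hmeas : ∀ k, MeasurableSet {t | R t k}) :
    Measurable (leastIndex R) := by
  classical
  convert measurable_find hR hmeas with t
  exact Nat.sInf_def (hR t)

theorem leastIndex_eq_of_forall_le_iff {s t : ℝ} {N : ℕ} (hs : ∃ k, R s k)
    (hN : leastIndex R s ≤ N) (hiff : ∀ k ≤ N, R s k ↔ R t k) :
    leastIndex R s = leastIndex R t := by
  have hRt : R t (leastIndex R s) := (hiff _ hN).1 (Nat.sInf_mem hs)
  have hle : leastIndex R t ≤ leastIndex R s := Nat.sInf_le hRt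
  exact (Nat.sInf_le ((hiff _ (hle.trans hN)).2 (Nat.sInf_mem ⟨_, hRt⟩))).antisymm hle

theorem tightInDensity_leastIndex {f : ℝ → X} (hf : TightInDensity f) {η : ℝ≥0∞} (hη : 0 < η)
    (hR : ∀ t, ∃ k, ∀ s, edist (f t) (f s) < η → R s k) : TightInDensity (leastIndex R) := by
  refine tightInDensity_nat_iff.2 fun σ hσ => ?_
  obtain ⟨S, hS, hκ⟩ := hf (η / 2) (ENNReal.half_pos hη.ne') σ hσ
  have hnear (z : X) : ∃ k, ∀ s, edist (f s) z < η / 2 → R s k := by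
    by_cases hz : ∃ t, edist (f t) z < η / 2
    · obtain ⟨t, ht⟩ := hz
      obtain ⟨k, hk⟩ := hR t
      refine ⟨k, fun s hs => hk s ((edist_triangle_right _ _ z).trans_lt ?_)⟩
      exact (ENNReal.add_lt_add ht hs).trans_eq (ENNReal.add_halves η)
    · exact ⟨0, fun s hs => absurd ⟨s, hs⟩ hz⟩
  choose K hK using hnear
  obtain ⟨N, hN⟩ := (hS.image K).bddAbove
  refine ⟨N, (kappaW_mono fun t ht => ?_).trans hκ⟩
  intro z hz
  by_contra hlt
  exact ht.not_ge ((Nat.sInf_le (hK z t (not_le.1 hlt))).trans (hN (Set.mem_image_of_mem K hz)))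

theorem almostInvariant_leastIndex (hR : ∀ t, ∃ k, R t k)
    (hinv : ∀ k, AlmostInvariant 𝓢 fun t => R t k) (htight : TightInDensity (leastIndex R)) :
    AlmostInvariant 𝓢 (leastIndex R) := by
  refine ENNReal.tendsto_nhds_zero.2 fun σ hσ => ?_
  have hσ₂ := ENNReal.half_pos hσ.ne'
  obtain ⟨N, hN⟩ := tightInDensity_nat_iff.1 htight _ hσ₂
  have hflip : Tendsto (fun τ => ∑ k ∈ Finset.range (N + 1), kappaW {t | R t k ≠ R (t + τ) k}) 𝓢
      (𝓝 0) := by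
    simpa using tendsto_finsetSum (Finset.range (N + 1)) fun k _ => hinv k
  filter_upwards [ENNReal.tendsto_nhds_zero.1 hflip _ hσ₂] with τ hτ
  calc kappaW {t | leastIndex R t ≠ leastIndex R (t + τ)}
      ≤ kappaW ({t | N < leastIndex R t} ∪
          ⋃ k ∈ Finset.range (N + 1), {t | R t k ≠ R (t + τ) k}) := by
        refine kappaW_mono fun t hne => ?_
        by_contra hnot
        simp only [Set.mem_union, Set.mem_iUnion₂, Finset.mem_range, Nat.lt_succ_iff,
          Set.mem_ofPred_eq, not_or, not_exists, not_lt, not_not] at hnot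
        exact hne (leastIndex_eq_of_forall_le_iff (hR t) hnot.1 fun k hk => (hnot.2 k hk).to_iff)
    _ ≤ σ / 2 + σ / 2 :=
        (kappaW_union_le _ _).trans (add_le_add hN ((kappaW_biUnion_le _ _).trans hτ))
    _ = σ := ENNReal.add_halves σ

/-- Labelings of the time axis by natural numbers that inherit almost periodicity along `𝓢` and
that, up to small density, use finitely many labels. -/
structure IsRegularLabel (𝓢 : Filter ℝ) (i : ℝ → ℕ) : Prop where
  measurable : Measurable i
  almostInvariant : AlmostInvariant 𝓢 i
  tight : TightInDensity i

theorem isRegularLabel_const (𝓢 : Filter ℝ) (n : ℕ) : IsRegularLabel 𝓢 fun _ => n where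
  measurable := measurable_const
  almostInvariant := by simp [AlmostInvariant, kappaW_empty, tendsto_const_nhds]
  tight := tightInDensity_nat_iff.2 fun σ _ => ⟨n, by simp [kappaW_empty]⟩

theorem exists_robust_choice {D : ℝ → X} {i : ℝ → ℕ} {C : ℕ → ℕ → Prop} {Ψ : ℕ → X → ℝ}
    {L : NNReal} (hΨ : ∀ k, LipschitzWith L (Ψ k)) {r s : ℝ} (hrs : r < s)
    (hcover : ∀ t, ∃ k, C (i t) k ∧ Ψ k (D t) < r) :
    ∃ η > 0, ∀ t, ∃ k, ∀ u, edist (D t, i t) (D u, i u) < η → C (i u) k ∧ Ψ k (D u) < s := by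
  obtain ⟨η, hη, hLη⟩ := ENNReal.exists_nnreal_pos_mul_lt (a := L)
    (b := ENNReal.ofReal (s - r)) ENNReal.coe_ne_top (by simpa using hrs)
  refine ⟨min η 1, lt_min (by simpa using hη) one_pos, fun t => ?_⟩
  obtain ⟨k, hC, hΨk⟩ := hcover t
  refine ⟨k, fun u hu => ?_⟩
  obtain ⟨hDu, hiu⟩ := max_lt_iff.1 hu
  have hlabel : i t = i u := nat_eq_of_edist_lt_one (hiu.trans_le (min_le_right _ _))
  have hclose : dist (Ψ k (D t)) (Ψ k (D u)) < s - r := by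
    rw [← edist_lt_ofReal]
    refine ((hΨ k).edist_le_mul _ _).trans_lt (lt_of_le_of_lt ?_ hLη)
    rw [mul_comm]
    gcongr
    exact hDu.le.trans (min_le_left _ _)
  exact ⟨hlabel ▸ hC, by linarith [(abs_lt.1 hclose).1]⟩

/-- Comparing with the dither instead of a constant makes the truth value of each constraint almost
invariant. -/
theorem exists_isRegularLabel {D : ℝ → X} {a : ℕ → ℝ} (hD : StronglyMeasurable D)
    (ha : Dispersing (fun k => densityPeriods D (ENNReal.ofReal (amp (k + 2)))) a)
    (hDtight : TightInDensity D) {i : ℝ → ℕ}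
    (hi : IsRegularLabel (densityReturn D ⊓ comap (torusHom a) (𝓝 0)) i)
    {C : ℕ → ℕ → Prop} {Ψ : ℕ → X → ℝ} {L : NNReal} (hΨ : ∀ k, LipschitzWith L (Ψ k)) {r : ℝ}
    (hr : 0 < r) (hcover : ∀ t, ∃ k, C (i t) k ∧ Ψ k (D t) < r / 4) :
    ∃ j, IsRegularLabel (densityReturn D ⊓ comap (torusHom a) (𝓝 0)) j ∧
      ∀ t, C (i t) (j t) ∧ Ψ (j t) (D t) < r := by
  let R (t : ℝ) (k : ℕ) : Prop := C (i t) k ∧ Ψ k (D t) < r * dither (torusHom a t)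
  obtain ⟨η, hη, hrobust⟩ := exists_robust_choice hΨ (show r / 4 < r / 2 by linarith) hcover
  have hRη (t : ℝ) : ∃ k, ∀ s, edist (D t, i t) (D s, i s) < η → R s k := by
    obtain ⟨k, hk⟩ := hrobust t
    refine ⟨k, fun s hs => (hk s hs).imp_right fun hlt => hlt.trans_le ?_⟩
    nlinarith [(dither_mem_Icc (torusHom a s)).1]
  have hR (t : ℝ) : ∃ k, R t k := (hRη t).imp fun k hk => hk t (by simpa using hη)
  have hmeas (k : ℕ) : MeasurableSet {t | R t k} :=
    (hi.measurable (Set.to_countable {n | C n k}).measurableSet).inter <| measurableSet_lt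
      ((hΨ k).continuous.comp_stronglyMeasurable hD).measurable
      ((continuous_dither.comp (continuous_torusHom a)).measurable.const_mul r)
  have hinv (k : ℕ) :
      AlmostInvariant (densityReturn D ⊓ comap (torusHom a) (𝓝 0)) fun t => R t k :=
    (hi.almostInvariant.prodMk (almostInvariant_lt_mul_dither hD ha (hΨ k) hr)).comp
      fun c => C c.1 k ∧ c.2
  have htight : TightInDensity (leastIndex R) :=
    tightInDensity_leastIndex (hDtight.prodMk hi.tight) hη hRη
  refine ⟨leastIndex R, ⟨measurable_leastIndex hR hmeas,
    almostInvariant_leastIndex hR hinv htight, htight⟩, fun t => ?_⟩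
  obtain ⟨hC, hΨj⟩ := Nat.sInf_mem (hR t)
  exact ⟨hC, hΨj.trans_le (by nlinarith [(dither_mem_Icc (torusHom a t)).2])⟩

end RegularLabel

section UniformlyRegular

variable {X : Type*} [PseudoEMetricSpace X] {𝓢 : Filter ℝ} {f : ℝ → X}

/-- `f` is a uniform limit of functions that factor through regular labels. -/
def UniformlyRegular (𝓢 : Filter ℝ) (f : ℝ → X) : Prop :=
  ∀ η > 0, ∃ i, IsRegularLabel 𝓢 i ∧ ∃ u : ℕ → X, ∀ t, edist (f t) (u (i t)) < η

theorem UniformlyRegular.le_densityReturn (hf : UniformlyRegular 𝓢 f) : 𝓢 ≤ densityReturn f := by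
  refine (hasBasis_densityReturn f).ge_iff.2 fun ε hε => ?_
  obtain ⟨i, hi, u, hu⟩ := hf (ε / 2) (ENNReal.half_pos hε.ne')
  filter_upwards [hi.almostInvariant.eventually_lt_const hε] with τ hτ
  refine (kappaW_mono fun t ht => ?_).trans_lt hτ
  intro heq
  have hlt := ENNReal.add_lt_add (hu t) (heq ▸ hu (t + τ))
  rw [ENNReal.add_halves] at hlt
  exact ((edist_triangle_right _ _ _).trans_lt hlt).not_ge ht

theorem UniformlyRegular.tightInDensity (hf : UniformlyRegular 𝓢 f) : TightInDensity f := by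
  intro ε hε σ hσ
  obtain ⟨i, hi, u, hu⟩ := hf ε hε
  obtain ⟨N, hN⟩ := tightInDensity_nat_iff.1 hi.tight σ hσ
  refine ⟨u '' Set.Iic N, (Set.finite_Iic N).image u, (kappaW_mono fun t ht => ?_).trans hN⟩
  by_contra hle
  exact (ht _ (Set.mem_image_of_mem u (Set.mem_Iic.2 (not_lt.1 hle)))).not_gt (hu t)

theorem UniformlyRegular.stronglyMeasurable (hf : UniformlyRegular 𝓢 f) : StronglyMeasurable f := by
  choose i hi u hu using fun n : ℕ => hf (2⁻¹ ^ n) (ENNReal.pow_pos (by simp) n)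
  refine stronglyMeasurable_of_tendsto atTop (f := fun n t => u n (i n t))
    (fun n => StronglyMeasurable.of_discrete.comp_measurable (hi n).measurable)
    (tendsto_pi_nhds.2 fun t => ?_)
  refine tendsto_iff_edist_tendsto_0.2 (tendsto_of_tendsto_of_tendsto_of_le_of_le
    tendsto_const_nhds (ENNReal.tendsto_pow_atTop_nhds_zero_of_lt_one (r := 2⁻¹) (by simp))
    (fun _ => zero_le) fun n => ?_)
  rw [edist_comm]
  exact (hu n t).le

end UniformlyRegular

section Selection

theorem exists_countable_superset_mapsTo {α ι : Type*} [Countable ι] (π : ι → α → α) {A : Set α}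
    (hA : A.Countable) : ∃ B : Set α, B.Countable ∧ A ⊆ B ∧ ∀ i, Set.MapsTo (π i) B B := by
  refine ⟨⋃ l : List ι, (fun x => l.foldr π x) '' A, Set.countable_iUnion fun l => hA.image _,
    fun x hx => Set.mem_iUnion.2 ⟨[], x, hx, rfl⟩, fun i x hx => ?_⟩
  obtain ⟨l, y, hy, rfl⟩ := Set.mem_iUnion.1 hx
  exact Set.mem_iUnion.2 ⟨i :: l, y, hy, rfl⟩

theorem exists_seq_of_forall_succ {α : Type*} {P : ℕ → α → Prop} {R : ℕ → α → α → Prop} {x : α}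
    (hx : P 0 x) (hstep : ∀ n a, P n a → ∃ b, P (n + 1) b ∧ R n a b) :
    ∃ a : ℕ → α, a 0 = x ∧ ∀ n, P n (a n) ∧ R n (a n) (a (n + 1)) := by
  choose! next hnext using hstep
  have hP (n : ℕ) : P n (Nat.rec x next n) := by
    induction n with
    | zero => exact hx
    | succ n ih => exact (hnext n _ ih).1
  exact ⟨Nat.rec x next, rfl, fun n => ⟨hP n, (hnext n _ (hP n)).2⟩⟩

variable {U : Type*} [MetricSpace U]

theorem lipschitzWith_infDist_closeds (x : U) :
    LipschitzWith 1 fun A : Closeds U => Metric.infDist x (A : Set U) := by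
  have hle {A B : Closeds U} (hAB : edist A B ≠ ∞) :
      Metric.infDist x (B : Set U) ≤ Metric.infDist x (A : Set U) + (edist A B).toReal :=
    Metric.infDist_le_infDist_add_hausdorffDist hAB
  refine LipschitzWith.of_edist_le fun A B => ?_
  rcases eq_or_ne (edist A B) ∞ with hAB | hAB
  · exact hAB ▸ le_top
  · rw [edist_dist, Real.dist_eq]
    refine ENNReal.ofReal_le_of_le_toReal (abs_sub_le_iff.2 ⟨?_, ?_⟩)
    · have := hle (edist_comm A B ▸ hAB)
      rw [edist_comm B] at this
      linarith
    · linarith [hle hAB]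

theorem abs_infDist_sub_infDist_lt {A B : Closeds U} {η : ℝ} (h : edist A B < ENNReal.ofReal η)
    (x : U) : |Metric.infDist x (A : Set U) - Metric.infDist x (B : Set U)| < η := by
  rw [← Real.dist_eq, ← edist_lt_ofReal]
  exact ((lipschitzWith_infDist_closeds x).edist_le_mul A B).trans_lt (by simpa using h)

/-- The values of `F` need not be separable, so the net is obtained by closing a dense sequence for
`g` under countably many approximate nearest-point maps. -/
theorem exists_countable_net {g : ℝ → U} {F : ℝ → Closeds U} (hg : StronglyMeasurable g)
    (hF : StronglyMeasurable F) (hFne : ∀ t, (F t : Set U).Nonempty) :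
    ∃ y : ℕ → U, (∀ t, ∀ s > 0, ∃ j, dist (y j) (g t) < s) ∧
      ∀ t j, ∀ s > 0, ∃ k, dist (y j) (y k) < Metric.infDist (y j) (F t : Set U) + s ∧
        Metric.infDist (y k) (F t : Set U) < s := by
  obtain ⟨c, hc, hgc⟩ := hg.isSeparable_range
  obtain ⟨𝓒, h𝓒, hF𝓒⟩ := hF.isSeparable_range
  have := h𝓒.to_subtype
  have hnearest (q : 𝓒 × ℕ) (x : U) : ∃ z, (q.1.1 : Set U).Nonempty →
      z ∈ q.1.1 ∧ dist x z < Metric.infDist x (q.1.1 : Set U) + 1 / (q.2 + 1) := by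
    by_cases hne : (q.1.1 : Set U).Nonempty
    · obtain ⟨z, hz⟩ := (Metric.infDist_lt_iff hne).1
        (lt_add_of_pos_right (Metric.infDist x (q.1.1 : Set U)) (Nat.one_div_pos_of_nat (n := q.2)))
      exact ⟨z, fun _ => hz⟩
    · exact ⟨x, fun h => absurd h hne⟩
  choose π hπ using hnearest
  obtain ⟨B, hB, hcB, hπB⟩ := exists_countable_superset_mapsTo π hc
  have hgB (t : ℝ) : g t ∈ closure B := closure_mono hcB (hgc (Set.mem_range_self t))
  obtain ⟨y, rfl⟩ := hB.exists_eq_range (closure_nonempty_iff.1 ⟨g 0, hgB 0⟩)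
  refine ⟨y, fun t s hs => ?_, fun t j s hs => ?_⟩
  · obtain ⟨_, ⟨j, rfl⟩, hj⟩ := Metric.mem_closure_iff.1 (hgB t) s hs
    exact ⟨j, by rwa [dist_comm]⟩
  · obtain ⟨A, hA, hFA⟩ := EMetric.mem_closure_iff.1 (hF𝓒 (Set.mem_range_self t))
      (ENNReal.ofReal (s / 2)) (by simpa using hs)
    obtain ⟨n, hn⟩ := exists_nat_one_div_lt (half_pos hs)
    have hAne : (A : Set U).Nonempty :=
      Metric.nonempty_of_hausdorffEDist_ne_top (hFne t) (hFA.trans ENNReal.ofReal_lt_top).ne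
    obtain ⟨hzA, hz⟩ := hπ (⟨A, hA⟩, n) (y j) hAne
    obtain ⟨k, hk⟩ := hπB (⟨A, hA⟩, n) (Set.mem_range_self j)
    rw [← hk] at hz hzA
    have hj := (abs_lt.1 (abs_infDist_sub_infDist_lt hFA (y j))).1
    have hk := (abs_lt.1 (abs_infDist_sub_infDist_lt hFA (y k))).2
    rw [Metric.infDist_zero_of_mem hzA] at hk
    exact ⟨k, by dsimp only at hz; linarith, by linarith⟩

theorem exists_mem_forall_dist_le [CompleteSpace U] {A : Closeds U} (hA : (A : Set U).Nonempty)
    {u : ℕ → U} {C : ℝ} (hu : ∀ n, dist (u n) (u (n + 1)) ≤ C / 2 / 2 ^ n)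
    (huA : Tendsto (fun n => Metric.infDist (u n) (A : Set U)) atTop (𝓝 0)) :
    ∃ z ∈ A, ∀ n, dist (u n) z ≤ C / 2 ^ n := by
  obtain ⟨z, hz⟩ := cauchySeq_tendsto_of_complete (cauchySeq_of_le_geometric_two hu)
  refine ⟨z, (A.isClosed.mem_iff_infDist_zero hA).2 ?_,
    dist_le_of_le_geometric_two_of_tendsto hu hz⟩
  exact tendsto_nhds_unique (((Metric.continuous_infDist_pt _).tendsto z).comp hz) huA

theorem tendsto_const_div_two_pow (C : ℝ) : Tendsto (fun n : ℕ => C / 2 ^ n) atTop (𝓝 0) :=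
  (tendsto_pow_atTop_atTop_of_one_lt one_lt_two).const_div_atTop C

theorem lipschitzWith_infDist_prod_closeds :
    LipschitzWith 2 fun z : U × Closeds U => Metric.infDist z.1 (z.2 : Set U) := by
  rw [← one_add_one_eq_two]
  exact LipschitzWith.uncurry (f := fun (x : U) (A : Closeds U) => Metric.infDist x (A : Set U))
    (fun A => Metric.lipschitz_infDist_pt _) lipschitzWith_infDist_closeds

variable {g : ℝ → U} {F : ℝ → Closeds U} {a : ℕ → ℝ} {y : ℕ → U} {δ : ℝ}
  (hg : StronglyMeasurable g) (hF : StronglyMeasurable F)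
  (ha : Dispersing (fun k => densityPeriods (fun t => (g t, F t)) (ENNReal.ofReal (amp (k + 2)))) a)
  (htight : TightInDensity fun t => (g t, F t))

include hg hF ha htight

theorem exists_isRegularLabel_near
    (hyg : ∀ t, ∀ s > 0, ∃ j, dist (y j) (g t) < s)
    (hyF : ∀ t j, ∀ s > 0, ∃ k, dist (y j) (y k) < Metric.infDist (y j) (F t : Set U) + s ∧
      Metric.infDist (y k) (F t : Set U) < s) (hδ : 0 < δ) :
    ∃ i, IsRegularLabel (densityReturn (fun t => (g t, F t)) ⊓ comap (torusHom a) (𝓝 0)) i ∧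
      ∀ t, Metric.infDist (y (i t)) (F t : Set U) < δ ∧
        dist (y (i t)) (g t) < Metric.infDist (g t) (F t : Set U) + δ := by
  let Ψ (k : ℕ) (z : U × Closeds U) : ℝ :=
    max (Metric.infDist (y k) (z.2 : Set U)) (dist (y k) z.1 - Metric.infDist z.1 (z.2 : Set U))
  have hΨ (k : ℕ) : LipschitzWith (max (1 * 1) (1 * 1 + 2)) (Ψ k) :=
    ((lipschitzWith_infDist_closeds (y k)).comp LipschitzWith.prod_snd).max
      (((LipschitzWith.dist_right (y k)).comp LipschitzWith.prod_fst).sub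
        lipschitzWith_infDist_prod_closeds)
  have hcover (t : ℝ) : ∃ k, True ∧ Ψ k (g t, F t) < δ / 4 := by
    obtain ⟨j, hj⟩ := hyg t (δ / 12) (by positivity)
    obtain ⟨k, hjk, hk⟩ := hyF t j (δ / 12) (by positivity)
    have hinf := Metric.infDist_le_infDist_add_dist (s := (F t : Set U)) (x := y j) (y := g t)
    have htri := dist_triangle_left (y k) (g t) (y j)
    exact ⟨k, trivial, max_lt (by linarith) (by dsimp only; linarith)⟩
  obtain ⟨i, hi, hiΨ⟩ := exists_isRegularLabel (hg.prodMk hF) ha htight (isRegularLabel_const _ 0)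
    (C := fun _ _ => True) hΨ hδ hcover
  refine ⟨i, hi, fun t => ?_⟩
  obtain ⟨hiF, hig⟩ := max_lt_iff.1 (hiΨ t).2
  exact ⟨hiF, sub_lt_iff_lt_add'.1 hig⟩

theorem exists_isRegularLabel_succ
    (hyF : ∀ t j, ∀ s > 0, ∃ k, dist (y j) (y k) < Metric.infDist (y j) (F t : Set U) + s ∧
      Metric.infDist (y k) (F t : Set U) < s) {r : ℝ} (hr : 0 < r) {i : ℝ → ℕ}
    (hi : IsRegularLabel (densityReturn (fun t => (g t, F t)) ⊓ comap (torusHom a) (𝓝 0)) i)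
    (hir : ∀ t, Metric.infDist (y (i t)) (F t : Set U) < r) :
    ∃ j, IsRegularLabel (densityReturn (fun t => (g t, F t)) ⊓ comap (torusHom a) (𝓝 0)) j ∧
      ∀ t, Metric.infDist (y (j t)) (F t : Set U) < r / 2 ∧ dist (y (i t)) (y (j t)) < 2 * r := by
  have hΨ (k : ℕ) : LipschitzWith (1 * 1)
      fun z : U × Closeds U => Metric.infDist (y k) (z.2 : Set U) :=
    (lipschitzWith_infDist_closeds (y k)).comp LipschitzWith.prod_snd
  have hcover (t : ℝ) : ∃ k, dist (y (i t)) (y k) < 2 * r ∧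
      Metric.infDist (y k) (F t : Set U) < r / 2 / 4 := by
    obtain ⟨k, hik, hk⟩ := hyF t (i t) (r / 2 / 4) (by positivity)
    exact ⟨k, by linarith [hir t], hk⟩
  obtain ⟨j, hj, hij⟩ := exists_isRegularLabel (hg.prodMk hF) ha htight hi
    (C := fun m k => dist (y m) (y k) < 2 * r) hΨ (half_pos hr) hcover
  exact ⟨j, hj, fun t => (hij t).symm⟩

theorem exists_seq_isRegularLabel (hFne : ∀ t, (F t : Set U).Nonempty) (hδ : 0 < δ) :
    ∃ (y : ℕ → U) (i : ℕ → ℝ → ℕ),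
      (∀ n, IsRegularLabel (densityReturn (fun t => (g t, F t)) ⊓ comap (torusHom a) (𝓝 0))
        (i n)) ∧
      (∀ t, dist (y (i 0 t)) (g t) < Metric.infDist (g t) (F t : Set U) + δ) ∧
      ∀ n t, Metric.infDist (y (i n t)) (F t : Set U) < δ / 2 ^ n ∧
        dist (y (i n t)) (y (i (n + 1) t)) < 2 * (δ / 2 ^ n) := by
  obtain ⟨y, hyg, hyF⟩ := exists_countable_net hg hF hFne
  obtain ⟨i₀, hi₀, hi₀δ⟩ := exists_isRegularLabel_near hg hF ha htight hyg hyF hδ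
  obtain ⟨i, rfl, hi⟩ := exists_seq_of_forall_succ
    (P := fun n j =>
      IsRegularLabel (densityReturn (fun t => (g t, F t)) ⊓ comap (torusHom a) (𝓝 0)) j ∧
        ∀ t, Metric.infDist (y (j t)) (F t : Set U) < δ / 2 ^ n)
    (R := fun n j k => ∀ t, dist (y (j t)) (y (k t)) < 2 * (δ / 2 ^ n))
    ⟨hi₀, fun t => by simpa using (hi₀δ t).1⟩ fun n j hj => by
      obtain ⟨k, hk, hkr⟩ := exists_isRegularLabel_succ hg hF ha htight hyF
        (by positivity : 0 < δ / 2 ^ n) hj.1 hj.2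
      exact ⟨k, ⟨hk, fun t => by rw [pow_succ, ← div_div]; exact (hkr t).1⟩, fun t => (hkr t).2⟩
  exact ⟨y, i, fun n => (hi n).1.1, fun t => (hi₀δ t).2, fun n t => ⟨(hi n).1.2 t, (hi n).2 t⟩⟩

theorem exists_uniformlyRegular_selection [CompleteSpace U] (hFne : ∀ t, (F t : Set U).Nonempty)
    (hδ : 0 < δ) :
    ∃ f, UniformlyRegular (densityReturn (fun t => (g t, F t)) ⊓ comap (torusHom a) (𝓝 0)) f ∧
      ∀ t, f t ∈ F t ∧ dist (f t) (g t) < Metric.infDist (g t) (F t : Set U) + δ := by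
  obtain ⟨y, i, hi, hstart, hsucc⟩ :=
    exists_seq_isRegularLabel hg hF ha htight hFne (by positivity : 0 < δ / 8)
  have hlim (t : ℝ) : Tendsto (fun n => Metric.infDist (y (i n t)) (F t : Set U)) atTop (𝓝 0) :=
    squeeze_zero (fun _ => Metric.infDist_nonneg) (fun n => (hsucc n t).1.le)
      (tendsto_const_div_two_pow _)
  choose f hfF hf using fun t => exists_mem_forall_dist_le (C := δ / 2) (hFne t)
    (fun n => ((hsucc n t).2.trans_eq (by ring)).le) (hlim t)
  refine ⟨f, fun η hη => ?_, fun t => ⟨hfF t, ?_⟩⟩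
  · obtain ⟨n, hn⟩ := ((ENNReal.tendsto_ofReal
      (tendsto_const_div_two_pow (δ / 2))).eventually_lt_const (by simpa using hη)).exists
    refine ⟨i n, hi n, y, fun t => lt_of_le_of_lt ?_ hn⟩
    rw [edist_comm, edist_dist]
    exact ENNReal.ofReal_le_ofReal (hf t n)
  · have h₀ := hf t 0
    rw [pow_zero, div_one, dist_comm] at h₀
    linarith [dist_triangle (f t) (y (i 0 t)) (g t), hstart t]

end Selection

section DensityEquiintegrable

theorem kappaW_toMeasurable (T : Set ℝ) : kappaW (toMeasurable volume T) = kappaW T := by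
  simp only [kappaW_eq_upperDensity, Measure.restrict_toMeasurable_of_sFinite]

theorem mul_kappaW_le_upperDensity {φ : ℝ → ℝ≥0∞} (hφ : AEMeasurable φ) {ε : ℝ≥0∞} (hε : ε ≠ ∞) :
    ε * kappaW {t | ε ≤ φ t} ≤ upperDensity (volume.withDensity φ) := by
  rw [kappaW_eq_upperDensity, ← upperDensity_smul hε]
  refine upperDensity_mono (Measure.le_iff.2 fun s hs => ?_)
  rw [Measure.smul_apply, Measure.restrict_apply hs, withDensity_apply _ hs, Set.inter_comm,
    ← Measure.restrict_apply' hs]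
  exact mul_meas_ge_le_lintegral₀ hφ.restrict ε

theorem upperDensity_withDensity_le {φ : ℝ → ℝ≥0∞} {ε : ℝ≥0∞} (hε : ε ≠ ∞) {T : Set ℝ}
    (hT : MeasurableSet T) (hφT : {t | ε ≤ φ t} ⊆ T) :
    upperDensity (volume.withDensity φ) ≤ ε + upperDensity ((volume.withDensity φ).restrict T) := by
  have hsplit : volume.withDensity φ ≤ ε • volume + (volume.withDensity φ).restrict T := by
    rw [← withDensity_const, restrict_withDensity hT, ← withDensity_indicator hT,
      ← withDensity_add_left measurable_const]
    refine withDensity_mono (ae_of_all _ fun t => ?_)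
    by_cases ht : t ∈ T
    · simp [ht]
    · simpa [ht] using (not_le.1 fun h => ht (hφT h)).le
  calc upperDensity (volume.withDensity φ)
      ≤ ε * upperDensity volume + upperDensity ((volume.withDensity φ).restrict T) := by
        rw [← upperDensity_smul hε]
        exact (upperDensity_mono hsplit).trans (upperDensity_add_le _ _)
    _ ≤ ε + upperDensity ((volume.withDensity φ).restrict T) := by
        gcongr
        exact mul_le_of_le_one_right' upperDensity_volume_le

theorem upperDensity_restrict_withDensity_comp_add_right (φ : ℝ → ℝ≥0∞) {T : Set ℝ}
    (hT : MeasurableSet T) (τ : ℝ) :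
    upperDensity ((volume.withDensity fun t => φ (t + τ)).restrict {t | t + τ ∈ T}) =
      upperDensity ((volume.withDensity φ).restrict T) := by
  rw [← upperDensity_map_add_right _ τ]
  congr 1
  refine Measure.ext fun s hs => ?_
  rw [Measure.map_apply (measurable_add_const τ) hs,
    Measure.restrict_apply (measurable_add_const τ hs), Measure.restrict_apply hs,
    withDensity_apply _ (hs.inter hT)]
  exact (withDensity_apply _ (measurable_add_const τ (hs.inter hT))).trans
    ((measurePreserving_add_right volume τ).setLIntegral_comp_preimage_emb
      (measurableEmbedding_addRight τ) φ (s ∩ T))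

/-- Uniform absolute continuity, in density, of the integrals of a family of functions. -/
def DensityEquiintegrable {ι : Type*} (φ : ι → ℝ → ℝ≥0∞) : Prop :=
  ∀ ε > 0, ∃ δ > 0, ∀ i T, MeasurableSet T → kappaW T < δ →
    upperDensity ((volume.withDensity (φ i)).restrict T) < ε

theorem DensityEquiintegrable.tendsto_upperDensity {ι : Type*} {φ : ι → ℝ → ℝ≥0∞}
    (hφ : DensityEquiintegrable φ) {𝓕 : Filter ι}
    (hsmall : ∀ ε > 0, Tendsto (fun i => kappaW {t | ε ≤ φ i t}) 𝓕 (𝓝 0)) :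
    Tendsto (fun i => upperDensity (volume.withDensity (φ i))) 𝓕 (𝓝 0) := by
  refine ENNReal.tendsto_nhds_zero.2 fun ε hε => ?_
  obtain ⟨ε', hε', hε'ε⟩ := ENNReal.lt_iff_exists_nnreal_btwn.1 (ENNReal.half_pos hε.ne')
  obtain ⟨δ, hδ, hδφ⟩ := hφ (ε / 2) (ENNReal.half_pos hε.ne')
  filter_upwards [(hsmall ε' hε').eventually_lt_const hδ] with i hi
  calc upperDensity (volume.withDensity (φ i))
      ≤ ε' + upperDensity
          ((volume.withDensity (φ i)).restrict (toMeasurable volume {t | ε' ≤ φ i t})) :=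
        upperDensity_withDensity_le ENNReal.coe_ne_top (measurableSet_toMeasurable _ _)
          (subset_toMeasurable _ _)
    _ ≤ ε / 2 + ε / 2 :=
        add_le_add hε'ε.le
          (hδφ i _ (measurableSet_toMeasurable _ _) ((kappaW_toMeasurable _).trans_lt hi)).le
    _ = ε := ENNReal.add_halves ε

theorem densityEquiintegrable_of_le_one {ι : Type*} {φ : ι → ℝ → ℝ≥0∞} (hφ : ∀ i t, φ i t ≤ 1) :
    DensityEquiintegrable φ := fun ε hε => by
  refine ⟨ε, hε, fun i T _ hTε => lt_of_le_of_lt ?_ hTε⟩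
  rw [kappaW_eq_upperDensity]
  refine upperDensity_mono (Measure.restrict_mono subset_rfl ?_)
  exact (withDensity_mono (ae_of_all _ (hφ i))).trans_eq withDensity_one

theorem DensityEquiintegrable.translates {A : ℝ → ℝ≥0∞} (hA : AEMeasurable A)
    (hAint : DensityEquiintegrable fun _ : Unit => A) {c : ℝ≥0∞} (hc : c ≠ ∞)
    {φ : ℝ → ℝ → ℝ≥0∞} (hφ : ∀ τ t, φ τ t ≤ c * (A t + A (t + τ))) :
    DensityEquiintegrable φ := fun ε hε => by
  have hη : ε / (c + 1) / 2 ≠ 0 := by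
    simpa [ENNReal.div_eq_zero_iff, ENNReal.add_eq_top] using ⟨hε.ne', hc⟩
  obtain ⟨δ, hδ, hδA⟩ := hAint _ (pos_iff_ne_zero.2 hη)
  refine ⟨δ, hδ, fun τ T hT hTδ => ?_⟩
  have htranslate : upperDensity ((volume.withDensity fun t => A (t + τ)).restrict T) <
      ε / (c + 1) / 2 := by
    have hback := upperDensity_restrict_withDensity_comp_add_right A
      (measurable_add_const (-τ) hT) τ
    simp only [Set.mem_preimage, add_neg_cancel_right, Set.ofPred_mem_eq] at hback
    rw [hback]
    exact hδA () _ (measurable_add_const (-τ) hT)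
      ((kappaW_preimage_add_right T (-τ)).trans_lt hTδ)
  have hle : volume.withDensity (φ τ) ≤
      c • (volume.withDensity A + volume.withDensity fun t => A (t + τ)) := by
    refine Measure.le_iff.2 fun s hs => ?_
    simp only [Measure.smul_apply, Measure.add_apply, withDensity_apply _ hs, smul_eq_mul]
    rw [← lintegral_add_left' hA.restrict, ← lintegral_const_mul' _ _ hc]
    exact lintegral_mono (hφ τ)
  calc upperDensity ((volume.withDensity (φ τ)).restrict T)
      ≤ c * (upperDensity ((volume.withDensity A).restrict T) +
          upperDensity ((volume.withDensity fun t => A (t + τ)).restrict T)) := by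
        refine (upperDensity_mono (Measure.restrict_mono subset_rfl hle)).trans ?_
        rw [Measure.restrict_smul, Measure.restrict_add, upperDensity_smul hc]
        gcongr
        exact upperDensity_add_le _ _
    _ ≤ (c + 1) * (upperDensity ((volume.withDensity A).restrict T) +
          upperDensity ((volume.withDensity fun t => A (t + τ)).restrict T)) := by
        gcongr
        exact le_self_add
    _ < ε := ENNReal.mul_lt_of_lt_div' <|
        (ENNReal.add_lt_add (hδA () T hT hTδ) htranslate).trans_eq (ENNReal.add_halves _)

end DensityEquiintegrable

section Weyl

variable {X : Type*}

theorem weylDinf_eq_upperDensity (d : X → X → ℝ) {p : ℝ} (hp : 0 < p) (f g : ℝ → X) :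
    weylDinf d p f g =
      upperDensity (volume.withDensity fun t => ENNReal.ofReal (d (f t) (g t) ^ p)) ^ (1 / p) := by
  simp only [upperDensity, withDensity_apply _ measurableSet_Icc]
  exact ((ENNReal.orderIsoRpow (1 / p) (one_div_pos.2 hp)).limsup_apply).symm

theorem hasBasis_inf_of_monotone {ι α : Type*} [LinearOrder ι] {l l' : Filter α} {p : ι → Prop}
    {s s' : ι → Set α} (hl : l.HasBasis p s) (hl' : l'.HasBasis p s') (hs : Monotone s)
    (hs' : Monotone s') : (l ⊓ l').HasBasis p fun i => s i ∩ s' i :=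
  (hl.inf hl').to_hasBasis (fun i hi => ⟨min i.1 i.2, min_rec' p hi.1 hi.2,
    Set.inter_subset_inter (hs (min_le_left _ _)) (hs' (min_le_right _ _))⟩)
    fun i hi => ⟨(i, i), ⟨hi, hi⟩, subset_rfl⟩

/-- The filter of return times of `f` for the Weyl semimetric of order `p`: `τ` tends to it when
`f (· + τ)` tends to `f`. -/
noncomputable def weylReturn (d : X → X → ℝ) (p : ℝ) (f : ℝ → X) : Filter ℝ :=
  comap (fun τ => weylDinf d p f fun t => f (t + τ)) (𝓝 0)

theorem APeriods_mono (d : X → X → ℝ) (p : ℝ) (f : ℝ → X) : Monotone fun ε => APeriods d p ε f :=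
  fun _ _ h _ hτ => lt_of_lt_of_le hτ (ENNReal.ofReal_le_ofReal h)

theorem hasBasis_weylReturn (d : X → X → ℝ) (p : ℝ) (f : ℝ → X) :
    (weylReturn d p f).HasBasis (fun ε : ℝ => 0 < ε) fun ε => APeriods d p ε f := by
  refine (ENNReal.nhds_zero_basis.comap _).to_hasBasis (fun ε hε => ?_)
    fun ε hε => ⟨ENNReal.ofReal ε, ENNReal.ofReal_pos.2 hε, subset_rfl⟩
  obtain ⟨r, -, hrε⟩ := ENNReal.lt_iff_exists_real_btwn.1 hε
  exact ⟨r, ENNReal.ofReal_pos.1 hrε.1, fun τ hτ => lt_trans hτ hrε.2⟩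

theorem weylReturn_eq_comap_upperDensity (d : X → X → ℝ) {p : ℝ} (hp : 0 < p) (f : ℝ → X) :
    weylReturn d p f = comap (fun τ => upperDensity
      (volume.withDensity fun t => ENNReal.ofReal (d (f t) (f (t + τ)) ^ p))) (𝓝 0) := by
  have hrpow : comap (fun x : ℝ≥0∞ => x ^ (1 / p)) (𝓝 0) = 𝓝 0 := by
    have hp' := one_div_pos.2 hp
    conv_lhs => rw [← ENNReal.zero_rpow_of_pos hp']
    exact ((ENNReal.orderIsoRpow (1 / p) hp').toHomeomorph.isInducing.nhds_eq_comap 0).symm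
  simp only [weylReturn, weylDinf_eq_upperDensity d hp]
  conv_rhs => rw [← hrpow, comap_comap]
  rfl

variable [PseudoEMetricSpace X]

theorem tendsto_kappaW_densityReturn (f : ℝ → X) {ε : ℝ≥0∞} (hε : 0 < ε) :
    Tendsto (fun τ => kappaW {t | ε ≤ edist (f t) (f (t + τ))}) (densityReturn f) (𝓝 0) := by
  refine (hasBasis_densityReturn f).tendsto_iff ENNReal.nhds_zero_basis |>.2 fun η hη =>
    ⟨min ε η, lt_min hε hη, fun τ hτ => ?_⟩
  exact (kappaW_mono fun t => (min_le_left ε η).trans).trans_lt (hτ.trans_le (min_le_right _ _))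

theorem densityReturn_le_weylReturn {d : X → X → ℝ} {p : ℝ} (hp : 0 < p)
    (hd : ∀ x y, ENNReal.ofReal (d x y ^ p) ≤ edist x y ^ p) {f : ℝ → X}
    (hf : DensityEquiintegrable fun τ t => ENNReal.ofReal (d (f t) (f (t + τ)) ^ p)) :
    densityReturn f ≤ weylReturn d p f := by
  rw [weylReturn_eq_comap_upperDensity d hp, ← tendsto_iff_comap]
  refine hf.tendsto_upperDensity fun ε hε => ?_
  refine tendsto_of_tendsto_of_tendsto_of_le_of_le tendsto_const_nhds
    (tendsto_kappaW_densityReturn f (ENNReal.rpow_pos_of_nonneg hε (inv_pos.2 hp).le))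
    (fun _ => zero_le) fun τ => kappaW_mono fun t ht => ?_
  exact (ENNReal.rpow_inv_le_iff hp).2 (ht.trans (hd _ _))

theorem weylReturn_le_densityReturn {d : X → X → ℝ}
    (hd : ∀ x y, min 1 (edist x y) ≤ ENNReal.ofReal (d x y)) {f : ℝ → X}
    (hf : AEStronglyMeasurable f) : weylReturn d 1 f ≤ densityReturn f := by
  rw [weylReturn_eq_comap_upperDensity d one_pos]
  refine (hasBasis_densityReturn f).ge_iff.2 fun ε hε => ?_
  set ε' := min 1 ε
  have hε' : 0 < ε' := lt_min one_pos hε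
  have hε'_top : ε' ≠ ∞ := ((min_le_left _ _).trans_lt ENNReal.one_lt_top).ne
  filter_upwards [tendsto_comap.eventually_lt_const (ENNReal.mul_pos hε'.ne' hε'.ne')] with τ hτ
  have hmeas : AEMeasurable fun t => min 1 (edist (f t) (f (t + τ))) :=
    aemeasurable_const.min (continuous_edist.comp_aestronglyMeasurable <| hf.prodMk
      (hf.comp_quasiMeasurePreserving (quasiMeasurePreserving_add_right volume τ))).aemeasurable
  have hchebyshev : ε' * kappaW {t | ε' ≤ min 1 (edist (f t) (f (t + τ)))} < ε' * ε' := by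
    refine (mul_kappaW_le_upperDensity hmeas hε'_top).trans_lt (lt_of_le_of_lt ?_ hτ)
    refine upperDensity_mono (withDensity_mono (ae_of_all _ fun t => ?_))
    simpa only [Real.rpow_one] using hd _ _
  calc kappaW {t | ε ≤ edist (f t) (f (t + τ))}
      ≤ kappaW {t | ε' ≤ min 1 (edist (f t) (f (t + τ)))} :=
        kappaW_mono fun t ht => Set.mem_ofPred_eq.mpr (min_le_min_left 1 ht)
    _ < ε' := lt_of_mul_lt_mul_left' hchebyshev
    _ ≤ ε := min_le_right _ _

theorem weylReturn_eq_densityReturn {d : X → X → ℝ}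
    (hd : ∀ x y, ENNReal.ofReal (d x y) = min 1 (edist x y)) {f : ℝ → X}
    (hf : AEStronglyMeasurable f) : weylReturn d 1 f = densityReturn f := by
  refine (weylReturn_le_densityReturn (fun x y => (hd x y).ge) hf).antisymm
    (densityReturn_le_weylReturn one_pos (fun x y => ?_)
      (densityEquiintegrable_of_le_one fun τ t => ?_))
  all_goals rw [Real.rpow_one, hd]
  · exact (min_le_right _ _).trans_eq (ENNReal.rpow_one _).symm
  · exact min_le_left _ _

theorem tightInDensity_of_forall_exists_isCompact {d : X → X → ℝ}
    (hd : ∀ x y, min 1 (edist x y) ≤ ENNReal.ofReal (d x y)) {f : ℝ → X}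
    (hf : ∀ ε > 0, ∀ δ > 0, ∃ K : Set X, IsCompact K ∧
      kappaW {t | ENNReal.ofReal ε ≤ dInfDist d (f t) K} < ENNReal.ofReal δ) :
    TightInDensity f := fun ε hε σ hσ => by
  obtain ⟨r, -, hr₀, hr⟩ := ENNReal.lt_iff_exists_real_btwn.1
    (lt_min one_pos (ENNReal.half_pos hε.ne') : (0 : ℝ≥0∞) < min 1 (ε / 2))
  obtain ⟨s, -, hs₀, hs⟩ := ENNReal.lt_iff_exists_real_btwn.1 hσ
  obtain ⟨K, hK, hKf⟩ := hf r (ENNReal.ofReal_pos.1 hr₀) s (ENNReal.ofReal_pos.1 hs₀)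
  obtain ⟨S, hS, hKS⟩ := EMetric.totallyBounded_iff.1 hK.totallyBounded _
    (ENNReal.half_pos hε.ne')
  refine ⟨S, hS, (kappaW_mono fun t ht => ?_).trans (hKf.le.trans hs.le)⟩
  rw [Set.mem_ofPred_eq, dInfDist]
  refine le_iInf₂ fun y hy => ?_
  obtain ⟨z, hz, hyz⟩ := Set.mem_iUnion₂.1 (hKS hy)
  have hty : ε / 2 ≤ edist (f t) y := by
    by_contra! hlt
    have := ENNReal.add_lt_add hlt hyz
    rw [ENNReal.add_halves] at this
    exact ((ht z hz).trans (edist_triangle _ y _)).not_gt this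
  exact hr.le.trans ((min_le_min_left 1 hty).trans (hd _ _))

theorem TightInDensity.exists_isCompact {d : X → X → ℝ}
    (hd : ∀ x y, ENNReal.ofReal (d x y) ≤ edist x y) {f : ℝ → X} (hf : TightInDensity f) {ε δ : ℝ}
    (hε : 0 < ε) (hδ : 0 < δ) : ∃ K : Set X, IsCompact K ∧
      kappaW {t | ENNReal.ofReal ε ≤ dInfDist d (f t) K} < ENNReal.ofReal δ := by
  obtain ⟨σ, hσ, hσδ⟩ := exists_between (ENNReal.ofReal_pos.2 hδ)
  obtain ⟨S, hS, hSf⟩ := hf _ (ENNReal.ofReal_pos.2 hε) σ hσ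
  refine ⟨S, hS.isCompact, (kappaW_mono fun t ht => ?_).trans_lt (hSf.trans_lt hσδ)⟩
  intro z hz
  exact ht.trans ((iInf₂_le z hz).trans (hd _ _))

theorem UniformlyRegular.memWpTilde {d : X → X → ℝ} (hd : ∀ x y, ENNReal.ofReal (d x y) ≤ edist x y)
    {p : ℝ} {x₀ : X} {f : ℝ → X} {𝓢 : Filter ℝ} (hf : UniformlyRegular 𝓢 f)
    (h𝓢 : IsReturnFilter 𝓢) (hMp : MemMp d p x₀ f) (hfp : densityReturn f ≤ weylReturn d p f) :
    MemWpTilde d p x₀ f :=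
  ⟨hMp, fun _ hε => h𝓢.relDense _ (hf.le_densityReturn.trans hfp
    ((hasBasis_weylReturn d p f).mem_of_mem hε)), fun _ hε _ hδ =>
    hf.tightInDensity.exists_isCompact hd hε hδ⟩

end Weyl

section Distances

theorem ofReal_bdist {X : Type*} [PseudoMetricSpace X] (x y : X) :
    ENNReal.ofReal (bdist x y) = min 1 (edist x y) := by
  rw [bdist, ENNReal.ofReal_min, ENNReal.ofReal_one, edist_dist]

theorem ofReal_clDist {X : Type*} [MetricSpace X] (A B : Closeds X) :
    ENNReal.ofReal (clDist A B) = min 1 (edist A B) :=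
  ENNReal.ofReal_toReal ((min_le_left _ _).trans_lt ENNReal.one_lt_top).ne

theorem memMp_bdist {X : Type*} [PseudoMetricSpace X] {f : ℝ → X} (hf : AEStronglyMeasurable f)
    (x₀ : X) : MemMp bdist 1 x₀ f := by
  refine ⟨hf, 1, fun ξ => (lintegral_mono (g := fun _ => (1 : ℝ≥0∞)) fun t => ?_).trans ?_⟩
  · rw [Real.rpow_one, ofReal_bdist]
    exact min_le_left _ _
  · simp

theorem dist_le_clbDist_singleton {X : Type*} [MetricSpace X] {A : Closeds X}
    (hA : Bornology.IsBounded (A : Set X)) {x : X} (hx : x ∈ A) (x₀ : X) :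
    dist x x₀ ≤ clbDist A ⟨{x₀}, isClosed_singleton⟩ := by
  have := Metric.infDist_le_hausdorffDist_of_mem (s := (A : Set X)) (t := {x₀}) hx
    (Metric.hausdorffEDist_ne_top_of_nonempty_of_bounded ⟨x, hx⟩ (Set.singleton_nonempty _) hA
      Bornology.isBounded_singleton)
  rwa [Metric.infDist_singleton] at this

end Distances

section MemMpStar

variable {X Y : Type*} {p : ℝ}

theorem MemMpStar.of_ae_le [TopologicalSpace X] [TopologicalSpace Y] {d : X → X → ℝ}
    {e : Y → Y → ℝ} {x₀ : X} {y₀ : Y} {f : ℝ → X} {G : ℝ → Y} (hG : MemMpStar e p y₀ G)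
    (hf : AEStronglyMeasurable f) (hfG : ∀ᵐ t, d (f t) x₀ ^ p ≤ e (G t) y₀ ^ p) :
    MemMpStar d p x₀ f := by
  have hint (s : Set ℝ) : ∫⁻ t in s, ENNReal.ofReal (d (f t) x₀ ^ p) ≤
      ∫⁻ t in s, ENNReal.ofReal (e (G t) y₀ ^ p) :=
    lintegral_mono_ae (ae_restrict_of_ae (hfG.mono fun _ => ENNReal.ofReal_le_ofReal))
  obtain ⟨⟨-, C, hC⟩, hstar⟩ := hG
  refine ⟨⟨hf, C, fun ξ => (hint _).trans (hC ξ)⟩, fun ε hε => ?_⟩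
  obtain ⟨δ, hδ, hδG⟩ := hstar ε hε
  refine ⟨δ, hδ, fun T hT hTδ => lt_of_le_of_lt ?_ (hδG T hT hTδ)⟩
  refine limsup_le_limsup (Eventually.of_forall fun l => iSup_mono fun ξ => ?_)
  gcongr ENNReal.ofReal (1 / l) * ?_
  exact hint _

theorem MemMpStar.densityEquiintegrable [TopologicalSpace X] {d : X → X → ℝ} {x₀ : X} {f : ℝ → X}
    (hf : MemMpStar d p x₀ f) :
    DensityEquiintegrable fun (_ : Unit) t => ENNReal.ofReal (d (f t) x₀ ^ p) := fun ε hε => by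
  obtain ⟨r, -, hr₀, hrε⟩ := ENNReal.lt_iff_exists_real_btwn.1 hε
  obtain ⟨δ, hδ, hδf⟩ := hf.2 r (ENNReal.ofReal_pos.1 hr₀)
  refine ⟨ENNReal.ofReal δ, ENNReal.ofReal_pos.2 hδ, fun _ T hT hTδ => ?_⟩
  simp only [upperDensity, Measure.restrict_apply measurableSet_Icc,
    withDensity_apply _ (measurableSet_Icc.inter hT)]
  exact (hδf T hT hTδ).trans hrε

theorem ennreal_add_rpow_le (hp : 0 ≤ p) (a b : ℝ≥0∞) : (a + b) ^ p ≤ 2 ^ p * (a ^ p + b ^ p) :=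
  calc (a + b) ^ p ≤ (2 * max a b) ^ p := by
        gcongr
        exact (add_le_add (le_max_left a b) (le_max_right a b)).trans_eq (two_mul _).symm
    _ = 2 ^ p * max (a ^ p) (b ^ p) := by
        rw [ENNReal.mul_rpow_of_nonneg _ _ hp, (ENNReal.monotone_rpow_of_nonneg hp).map_max]
    _ ≤ 2 ^ p * (a ^ p + b ^ p) := by
        gcongr
        exact max_le_add_of_nonneg zero_le zero_le

theorem MemMpStar.densityReturn_le_weylReturn_dist [PseudoMetricSpace X] {x₀ : X} {f : ℝ → X}
    (hp : 0 < p) (hf : MemMpStar dist p x₀ f) : densityReturn f ≤ weylReturn dist p f := by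
  have hedist (x y : X) : ENNReal.ofReal (dist x y ^ p) = edist x y ^ p := by
    rw [edist_dist, ENNReal.ofReal_rpow_of_nonneg dist_nonneg hp.le]
  refine densityReturn_le_weylReturn hp (fun x y => (hedist x y).le) ?_
  refine hf.densityEquiintegrable.translates ?_ (c := 2 ^ p) (by finiteness) fun τ t => ?_
  · exact ((hf.1.1.dist aestronglyMeasurable_const).aemeasurable.pow_const p).ennreal_ofReal
  · simp only [hedist]
    exact (ENNReal.rpow_le_rpow (edist_triangle_right _ _ x₀) hp.le).trans
      (ennreal_add_rpow_le hp.le _ _)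

end MemMpStar

section FrequencyModule

variable {V : Type*} {d : V → V → ℝ} {h : ℝ → V}

theorem tendsto_coe_unitAddCircle_of_mem_WMod {a : ℝ} (ha : 2 * Real.pi * a ∈ WMod d h) :
    Tendsto (fun τ : ℝ => ((a * τ : ℝ) : UnitAddCircle)) (weylReturn d 1 h) (𝓝 0) := by
  have : (weylReturn d 1 h).IsCountablyGenerated := comap.isCountablyGenerated _ _
  refine tendsto_of_seq_tendsto fun τ hτ => ?_
  rw [weylReturn, tendsto_comap_iff] at hτ
  have hcoe : IsInducing fun z : Circle => (z : ℂ) := ⟨rfl⟩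
  have htoCircle : IsInducing (AddCircle.toCircle : UnitAddCircle → Circle) := by
    convert (AddCircle.homeomorphCircle (one_ne_zero' ℝ)).isInducing using 1
    exact funext fun x => (AddCircle.homeomorphCircle_apply one_ne_zero x).symm
  rw [htoCircle.tendsto_nhds_iff, hcoe.tendsto_nhds_iff, AddCircle.toCircle_zero, Circle.coe_one]
  refine (ha τ hτ).congr fun n => ?_
  simp only [Function.comp_apply, AddCircle.toCircle_apply_mk, Circle.coe_exp, div_one,
    mul_assoc, mul_comm Complex.I]

theorem weylReturn_le_comap_torusHom {ι : Type*} {a : ι → ℝ}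
    (ha : ∀ k, 2 * Real.pi * a k ∈ WMod d h) :
    weylReturn d 1 h ≤ comap (torusHom a) (𝓝 0) :=
  tendsto_iff_comap.1 (tendsto_pi_nhds.2 fun k => tendsto_coe_unitAddCircle_of_mem_WMod (ha k))

theorem exists_small_mem_of_dense_WMod (hd : Dense (WMod d h)) {η : ℝ} (hη : 0 < η) :
    ∃ x ∈ {x | 2 * Real.pi * x ∈ WMod d h}, 0 < x ∧ x < η := by
  have hπ := Real.two_pi_pos
  obtain ⟨l, hl, hl₀, hlη⟩ := hd.exists_between (mul_pos hπ hη)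
  refine ⟨l / (2 * Real.pi), ?_, div_pos hl₀ hπ, (div_lt_iff₀' hπ).2 hlη⟩
  rwa [Set.mem_ofPred_eq, mul_div_cancel₀ _ hπ.ne']

end FrequencyModule

section Main

variable {U : Type*} [MetricSpace U] {g : ℝ → U} {F : ℝ → Closeds U}

theorem exists_stronglyMeasurable_nonempty_closeds (hF : AEStronglyMeasurable F)
    (hFne : ∀ᵐ t, (F t : Set U).Nonempty) :
    ∃ F' : ℝ → Closeds U, StronglyMeasurable F' ∧ (∀ t, (F' t : Set U).Nonempty) ∧
      F =ᵐ[volume] F' := by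
  borelize (Closeds U)
  obtain ⟨t, x, hx⟩ := hFne.exists
  have : IsOpen {A : Closeds U | (A : Set U).Nonempty} := by
    simpa using Closeds.isOpen_inter_nonempty_of_isOpen (isOpen_univ (X := U))
  exact hF.exists_stronglyMeasurable_range_subset this.measurableSet ⟨F t, x, hx⟩ hFne

theorem exists_uniformlyRegular_ae_selection [CompleteSpace U] (hg : AEStronglyMeasurable g)
    (hF : AEStronglyMeasurable F) (hret : IsReturnFilter (densityReturn g ⊓ densityReturn F))
    (hgt : TightInDensity g) (hFt : TightInDensity F) (hFne : ∀ᵐ t, (F t : Set U).Nonempty)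
    {δ : ℝ} (hδ : 0 < δ) {M : Set ℝ} (hM : ∀ η > 0, ∃ x ∈ M, 0 < x ∧ x < η) :
    ∃ (a : ℕ → ℝ) (f : ℝ → U), (∀ k, a k ∈ M) ∧
      UniformlyRegular (densityReturn g ⊓ densityReturn F ⊓ comap (torusHom a) (𝓝 0)) f ∧
      (∀ᵐ t, f t ∈ (F t : Set U)) ∧ ∀ᵐ t, dist (f t) (g t) < Metric.infDist (g t) (F t) + δ := by
  obtain ⟨g', hg', hgg'⟩ := hg
  obtain ⟨F', hF', hFne', hFF'⟩ := exists_stronglyMeasurable_nonempty_closeds hF hFne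
  have hprod : densityReturn g ⊓ densityReturn F = densityReturn fun t => (g' t, F' t) := by
    rw [densityReturn_prodMk, densityReturn_congr_ae hgg', densityReturn_congr_ae hFF']
  rw [hprod] at hret ⊢
  obtain ⟨a, haM, ha⟩ := exists_dispersing hret (fun k => (hasBasis_densityReturn _).mem_of_mem
    (ENNReal.ofReal_pos.2 (amp_pos (k + 2)))) hM
  obtain ⟨f, hf, hfsel⟩ := exists_uniformlyRegular_selection hg' hF' ha
    ((hgt.congr_ae hgg').prodMk (hFt.congr_ae hFF')) hFne' hδ
  refine ⟨a, f, haM, hf, ?_, ?_⟩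
  · filter_upwards [hFF'] with t ht
    exact ht ▸ (hfsel t).1
  · filter_upwards [hgg', hFF'] with t hgt hFt
    rw [hgt, hFt]
    exact (hfsel t).2

theorem weyl_tilde_selection_order_p_general [CompleteSpace U] {V : Type*} [PseudoMetricSpace V]
    (x₀ : U)
    (hg : MemWpTilde bdist 1 x₀ g) (hFne : ∀ t, (F t : Set U).Nonempty)
    (hF : MemWpTilde clDist 1 (⟨{x₀}, isClosed_singleton⟩ : Closeds U) F)
    (hT : ∀ ε > 0, RelDense (APeriods bdist 1 ε g ∩ APeriods clDist 1 ε F)) {p : ℝ} (hp : 0 < p)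
    (hFbdd : ∀ t, Bornology.IsBounded (F t : Set U))
    (hFstar : MemMpStar clbDist p (⟨{x₀}, isClosed_singleton⟩ : Closeds U) F) {δ : ℝ} (hδ : 0 < δ)
    {h : ℝ → V} (hh : Dense (WMod bdist h)) :
    ∃ f : ℝ → U, MemWpTilde bdist 1 x₀ f ∧ (∀ᵐ t, f t ∈ (F t : Set U)) ∧
      (∀ᵐ t, dist (f t) (g t) < Metric.infDist (g t) (F t) + δ) ∧
      (∀ ε' > (0 : ℝ), ∃ ε > (0 : ℝ),
        (APeriods bdist 1 ε g ∩ APeriods clDist 1 ε F) ∩ APeriods bdist 1 ε h ⊆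
          APeriods bdist 1 ε' f) ∧
      MemMpStar dist p x₀ f ∧ MemWpTilde dist p x₀ f := by
  have hbasis := hasBasis_inf_of_monotone (hasBasis_weylReturn bdist 1 g)
    (hasBasis_weylReturn clDist 1 F) (APeriods_mono ..) (APeriods_mono ..)
  have hgF : weylReturn bdist 1 g ⊓ weylReturn clDist 1 F = densityReturn g ⊓ densityReturn F := by
    rw [weylReturn_eq_densityReturn ofReal_bdist hg.1.1,
      weylReturn_eq_densityReturn ofReal_clDist hF.1.1]
  have hret : IsReturnFilter (densityReturn g ⊓ densityReturn F) :=
    ⟨fun S hS => let ⟨ε, hε, hεS⟩ := hbasis.mem_iff.1 (hgF ▸ hS); (hT ε hε).mono hεS,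
      tendsto_sub_inf (tendsto_sub_densityReturn g) (tendsto_sub_densityReturn F)⟩
  obtain ⟨a, f, ha, hf, hfF, hfg⟩ := exists_uniformlyRegular_ae_selection hg.1.1 hF.1.1 hret
    (tightInDensity_of_forall_exists_isCompact (fun _ _ => (ofReal_bdist _ _).ge) hg.2.2)
    (tightInDensity_of_forall_exists_isCompact (fun _ _ => (ofReal_clDist _ _).ge) hF.2.2)
    (ae_of_all _ hFne) hδ fun _ => exists_small_mem_of_dense_WMod hh
  have h𝓢 := hret.inf_comap_nhds_zero (torusHom a)
  have hfm := hf.stronglyMeasurable.aestronglyMeasurable (μ := volume)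
  have hfstar : MemMpStar dist p x₀ f := hFstar.of_ae_le hfm <| hfF.mono fun t ht =>
    Real.rpow_le_rpow dist_nonneg (dist_le_clbDist_singleton (hFbdd t) ht x₀) hp.le
  have hfret := weylReturn_eq_densityReturn ofReal_bdist hfm
  refine ⟨f, hf.memWpTilde (fun x y => (ofReal_bdist x y).trans_le (min_le_right _ _)) h𝓢
    (memMp_bdist hfm x₀) hfret.ge, hfF, hfg, fun ε' hε' => ?_, hfstar,
    hf.memWpTilde (fun x y => (edist_dist x y).ge) h𝓢 hfstar.1
      (hfstar.densityReturn_le_weylReturn_dist hp)⟩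
  have hle : weylReturn bdist 1 g ⊓ weylReturn clDist 1 F ⊓ weylReturn bdist 1 h ≤
      weylReturn bdist 1 f := by
    rw [hgF, hfret]
    exact (inf_le_inf_left _ (weylReturn_le_comap_torusHom ha)).trans hf.le_densityReturn
  exact (hasBasis_inf_of_monotone hbasis (hasBasis_weylReturn bdist 1 h)
    ((APeriods_mono ..).inter (APeriods_mono ..)) (APeriods_mono ..)).mem_iff.1
    (hle ((hasBasis_weylReturn bdist 1 f).mem_of_mem hε'))

end Main

open TopologicalSpace in
/-- **Theorem 3, last part.**
If moreover `F ∈ M*_p(ℝ, cl_b U)` for some `p ≥ 1`, then the selection `f_δ` of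
Theorem 3 can be chosen so that in addition
`f_δ ∈ W̃(ℝ,U) ∩ M*_p(ℝ,U) ⊆ W̃_p(ℝ,U)`. -/
theorem weyl_tilde_selection_order_p {U : Type*} [MetricSpace U] [CompleteSpace U] (x₀ : U)
    (g : ℝ → U) (hg : MemWpTilde bdist 1 x₀ g)
    (F : ℝ → Closeds U) (hFne : ∀ t : ℝ, (F t : Set U).Nonempty)
    (hF : MemWpTilde clDist 1 (⟨{x₀}, isClosed_singleton⟩ : Closeds U) F)
    (hT : ∀ ε > (0 : ℝ), RelDense (APeriods bdist 1 ε g ∩ APeriods clDist 1 ε F))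
    (p : ℝ) (hp : 1 ≤ p)
    (hFbdd : ∀ t : ℝ, Bornology.IsBounded (F t : Set U))
    (hFstar : MemMpStar clbDist p (⟨{x₀}, isClosed_singleton⟩ : Closeds U) F)
    (δ : ℝ) (hδ : 0 < δ)
    (h : ℝ → ℝ) (hh : MemWp dist 1 (0 : ℝ) h)
    (hhdense : Dense (WMod bdist h)) (hhcount : (WMod bdist h).Countable) :
    ∃ f : ℝ → U, MemWpTilde bdist 1 x₀ f ∧
      (∀ᵐ t ∂(volume : Measure ℝ), f t ∈ (F t : Set U)) ∧
      (∀ᵐ t ∂(volume : Measure ℝ),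
        dist (f t) (g t) < Metric.infDist (g t) (F t) + δ) ∧
      (∀ ε' > (0 : ℝ), ∃ ε > (0 : ℝ),
        (APeriods bdist 1 ε g ∩ APeriods clDist 1 ε F) ∩ APeriods bdist 1 ε h ⊆
          APeriods bdist 1 ε' f) ∧
      MemMpStar dist p x₀ f ∧ MemWpTilde dist p x₀ f := by
  exact weyl_tilde_selection_order_p_general x₀ hg hFne hF hT (zero_lt_one.trans_le hp) hFbdd
    hFstar hδ hhdense
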